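/- arXiv:1802.02023 — 2 statements merged into one kernel-verified Lean document; each statement's English description precedes it below -/
import Mathlib

section
/- Define z₁(q) = 1728·η(q)²⁴ / E₄(q)³. For every real q ∈ (0, e^{−2π}) one has 0 < z₁(q) < 1, and the function φ(q) = F₁(1/2, z₁(q)) / F₁(0, z₁(q)) satisfies (q·d/dq)³ φ(q) = 3√3 · η(q)¹² · E₆(q) / E₄(q)², where (q·d/dq)³ denotes the threefold application of the operator f(q) ↦ q·f′(q). -/
open Real

/-- The Dedekind eta q-series `η(q) = q^{1/24} · ∏_{n=1}^∞ (1 − qⁿ)`. -/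
noncomputable def etaQ (q : ℝ) : ℝ := q ^ ((1 : ℝ) / 24) * ∏' n : ℕ, (1 - q ^ (n + 1))

/-- `σ₃(n)`, the sum of the cubes of the positive divisors of `n`. -/
def sigma3 (n : ℕ) : ℕ := ∑ d ∈ n.divisors, d ^ 3

/-- `σ₅(n)`, the sum of the fifth powers of the positive divisors of `n`. -/
def sigma5 (n : ℕ) : ℕ := ∑ d ∈ n.divisors, d ^ 5

/-- The Eisenstein series `E₄(q) = 1 + 240·∑_{n=1}^∞ σ₃(n) qⁿ`. -/
noncomputable def E4 (q : ℝ) : ℝ := 1 + 240 * ∑' n : ℕ, (sigma3 (n + 1) : ℝ) * q ^ (n + 1)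

/-- The Eisenstein series `E₆(q) = 1 − 504·∑_{n=1}^∞ σ₅(n) qⁿ`. -/
noncomputable def E6 (q : ℝ) : ℝ := 1 - 504 * ∑' n : ℕ, (sigma5 (n + 1) : ℝ) * q ^ (n + 1)

/-- `F₁(x,z) = ∑_{n=0}^∞ z^{n+x} · (1/2+x)_n (1/6+x)_n (5/6+x)_n / ((1+x)_n)³`. -/
noncomputable def F1 (x z : ℝ) : ℝ :=
  ∑' n : ℕ, z ^ ((n : ℝ) + x) *
    ((ascPochhammer ℝ n).eval (1 / 2 + x) * (ascPochhammer ℝ n).eval (1 / 6 + x) *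
      (ascPochhammer ℝ n).eval (5 / 6 + x)) / ((ascPochhammer ℝ n).eval (1 + x)) ^ 3

/-- `z₁(q) = 1728·η(q)²⁴ / E₄(q)³`. -/
noncomputable def z1 (q : ℝ) : ℝ := 1728 * etaQ q ^ 24 / E4 q ^ 3

/-- The differential operator `f ↦ q·f′(q)`. -/
noncomputable def qDeriv (f : ℝ → ℝ) : ℝ → ℝ := fun q => q * deriv f q

/-!
Write `D = q d/dq`, `θ = z d/dz` and `L = θ³ - z (θ + 1/2) (θ + 1/6) (θ + 5/6)`.  Ramanujan's
identities express `D E₂`, `D E₄`, `D E₆` as polynomials in `E₂`, `E₄`, `E₆`; with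
`z₁ = 1 - E₆² / E₄³` they give `D z₁ = z₁ E₆ / E₄` and then, for every function `u` on `(0, 1)`,
`D³ (u ∘ z₁ / √E₄) = (E₆ / √E₄) · (L u) ∘ z₁`, an instance of Bol's identity in weight `-2`.

By Frobenius' method `L (F₁(x, ·)) = x³ zˣ`.  For `x = 0` the function `F₁(0, z₁) / √E₄` is thus
killed by `D³`, and its behaviour as `q → 0` forces it to be `1`.  Hence
`F₁(x, z₁) / F₁(0, z₁) = F₁(x, z₁) / √E₄` has third derivative `x³ z₁ˣ E₆ / √E₄`, and at
`x = 1/2` one has `√z₁ = 24 √3 η¹² / √E₄³`.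

`E₆` vanishes at `q = exp (-2π)`, that is `τ = i`, and is decreasing in `q`, so `z₁ < 1` to the
left of that point.
-/

section Analysis

open Filter Topology Asymptotics

theorem eqOn_const_of_hasDerivAt_zero {f : ℝ → ℝ} {a b c : ℝ} (hab : a < b)
    (hf : ∀ t ∈ Set.Ioo a b, HasDerivAt f 0 t) (hc : Tendsto f (𝓝[>] a) (𝓝 c)) :
    Set.EqOn f (fun _ ↦ c) (Set.Ioo a b) := by
  obtain ⟨d, hd⟩ := isOpen_Ioo.exists_is_const_of_deriv_eq_zero isPreconnected_Ioo
    (fun t ht ↦ (hf t ht).differentiableAt.differentiableWithinAt) fun t ht ↦ (hf t ht).deriv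
  have hlim : Tendsto f (𝓝[>] a) (𝓝 d) := tendsto_const_nhds.congr' <| by
    filter_upwards [Ioo_mem_nhdsGT hab] with t ht using (hd t ht).symm
  exact fun t ht ↦ (hd t ht).trans (tendsto_nhds_unique hlim hc)

theorem isBigO_natCast_add_mul (x : ℝ) {a : ℕ → ℝ} {m : ℕ}
    (ha : a =O[atTop] fun n ↦ ((n ^ m : ℕ) : ℝ)) :
    (fun n : ℕ ↦ (n + x) * a n) =O[atTop] fun n ↦ ((n ^ (m + 1) : ℕ) : ℝ) := by
  have hadd : (fun n : ℕ ↦ (n : ℝ) + x) =O[atTop] fun n ↦ (n : ℝ) :=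
    (isBigO_refl _ _).add (isLittleO_const_left.2 (.inr <| by
      simpa [Function.comp_def] using tendsto_natCast_atTop_atTop (R := ℝ))).isBigO
  exact (hadd.mul ha).congr_right fun n ↦ by push_cast; ring

theorem hasDerivAt_tsum_mul_pow {𝕜 : Type*} [RCLike 𝕜] {a : ℕ → 𝕜} {m : ℕ}
    (ha : a =O[atTop] fun n ↦ ((n ^ m : ℕ) : ℝ)) {z : 𝕜} (hz : ‖z‖ < 1) :
    HasDerivAt (fun w ↦ ∑' n, a n * w ^ n) (∑' n : ℕ, a n * (n * z ^ (n - 1))) z := by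
  obtain ⟨r, hzr, hr⟩ := exists_between hz
  have hr_pos : 0 < r := (norm_nonneg z).trans_lt hzr
  have hna : (fun n : ℕ ↦ (n + 0) * ‖a n‖) =O[atTop] fun n ↦ ((n ^ (m + 1) : ℕ) : ℝ) :=
    isBigO_natCast_add_mul 0 ha.norm_left
  have hsum : Summable fun n : ℕ ↦ ‖(n + 0) * ‖a n‖ * r ^ n‖ * r⁻¹ :=
    (summable_norm_mul_geometric_of_norm_lt_one' (by rwa [norm_of_nonneg hr_pos.le]) hna).mul_right
      _
  refine hasDerivAt_tsum_of_isPreconnected hsum Metric.isOpen_ball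
    (convex_ball (0 : 𝕜) r).isPreconnected (fun n y _ ↦ (hasDerivAt_pow n y).const_mul (a n))
    (fun n y hy ↦ ?_) (Metric.mem_ball_self hr_pos)
    (summable_of_ne_finset_zero (s := {0}) fun n hn ↦ by simp_all) (mem_ball_zero_iff.2 hzr)
  rcases n with - | n
  · simp
  · have hpow : ‖y‖ ^ n ≤ r ^ n := by
      gcongr
      exact (mem_ball_zero_iff.1 hy).le
    calc ‖a (n + 1) * ((n + 1 : ℕ) * y ^ n)‖ = (n + 1 : ℕ) * ‖a (n + 1)‖ * ‖y‖ ^ n := by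
          rw [norm_mul, norm_mul, norm_pow, RCLike.norm_natCast]
          ring
      _ ≤ (n + 1 : ℕ) * ‖a (n + 1)‖ * r ^ n := by gcongr
      _ = ‖((n + 1 : ℕ) + 0) * ‖a (n + 1)‖ * r ^ (n + 1)‖ * r⁻¹ := by
          rw [add_zero, norm_of_nonneg (by positivity), pow_succ]
          field_simp

theorem tendsto_tsum_mul_pow_zero {a : ℕ → ℝ} {m : ℕ}
    (ha : a =O[atTop] fun n ↦ ((n ^ m : ℕ) : ℝ)) :
    Tendsto (fun z ↦ ∑' n, a n * z ^ n) (𝓝 0) (𝓝 (a 0)) := by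
  have hcont : ContinuousAt (fun z ↦ ∑' n, a n * z ^ n) 0 :=
    (hasDerivAt_tsum_mul_pow ha (by simp)).continuousAt
  have hval : ∑' n, a n * (0 : ℝ) ^ n = a 0 := by
    rw [tsum_eq_single 0 fun n hn ↦ by simp [hn], pow_zero, mul_one]
  simpa only [hval] using hcont.tendsto

/-- The generalized power series `∑ aₙ z^(n + x)`, with the common factor `z ^ x` pulled out. -/
noncomputable def rpowSeries (x : ℝ) (a : ℕ → ℝ) (z : ℝ) : ℝ := z ^ x * ∑' n, a n * z ^ n

variable {x z : ℝ} {a : ℕ → ℝ} {m : ℕ}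

theorem rpowSeries_eq_tsum (hz : 0 < z) : rpowSeries x a z = ∑' n : ℕ, a n * z ^ (n + x) := by
  rw [rpowSeries, ← tsum_mul_left]
  refine tsum_congr fun n ↦ ?_
  rw [rpow_add hz, rpow_natCast]
  ring

theorem tendsto_rpowSeries_zero (ha : a =O[atTop] fun n ↦ ((n ^ m : ℕ) : ℝ)) :
    Tendsto (rpowSeries 0 a) (𝓝 0) (𝓝 (a 0)) :=
  (tendsto_tsum_mul_pow_zero ha).congr fun z ↦ by rw [rpowSeries, rpow_zero, one_mul]

theorem hasDerivAt_rpowSeries (ha : a =O[atTop] fun n ↦ ((n ^ m : ℕ) : ℝ))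
    (hz : z ∈ Set.Ioo 0 1) :
    HasDerivAt (rpowSeries x a) (rpowSeries x (fun n ↦ (n + x) * a n) z / z) z := by
  have hz0 := hz.1.ne'
  have hz1 : ‖z‖ < 1 := (norm_of_nonneg hz.1.le).trans_lt hz.2
  have hsum : Summable fun n ↦ a n * z ^ n :=
    (summable_norm_mul_geometric_of_norm_lt_one' hz1 ha).of_norm
  have hsum' : Summable fun n : ℕ ↦ (n + 0) * a n * z ^ n :=
    (summable_norm_mul_geometric_of_norm_lt_one' hz1 (isBigO_natCast_add_mul 0 ha)).of_norm
  have hshift (n : ℕ) : z * (a n * (n * z ^ (n - 1))) = (n + 0) * a n * z ^ n := by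
    rcases n with - | n
    · simp
    · rw [Nat.add_sub_cancel]
      ring
  have hsplit : ∑' n : ℕ, (n + x) * a n * z ^ n =
      z * ∑' n : ℕ, a n * (n * z ^ (n - 1)) + x * ∑' n, a n * z ^ n := by
    rw [← tsum_mul_left, ← tsum_mul_left, tsum_congr hshift, ← hsum'.tsum_add (hsum.mul_left x)]
    exact tsum_congr fun n ↦ by ring
  refine ((hasDerivAt_rpow_const (.inl hz0)).mul (hasDerivAt_tsum_mul_pow ha hz1)).congr_deriv ?_
  rw [rpowSeries, hsplit, rpow_sub_one hz0]
  field_simp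
  ring

end Analysis

section RamanujanIdentities

open UpperHalfPlane hiding I
open Complex Derivative ModularForm Filter Topology
open scoped MatrixGroups Manifold

theorem tendsto_atImInfty_of_hasSum_qExpansion {h : ℝ} (hh : 0 < h) {f : ℍ → ℂ} {c : ℕ → ℂ}
    (hf : ∀ τ : ℍ, HasSum (fun m ↦ c m • Function.Periodic.qParam h τ ^ m) (f τ)) :
    Tendsto f atImInfty (𝓝 (c 0)) := by
  let q : ℍ → ℂ := fun τ ↦ Function.Periodic.qParam h τ
  have hq_ne (τ : ℍ) : q τ ≠ 0 := Function.Periodic.qParam_ne_zero _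
  have hq : q =o[atImInfty] (1 : ℍ → ℝ) :=
    (Asymptotics.isLittleO_one_iff ℝ).2 (qParam_tendsto_atImInfty hh)
  have hquot : (fun τ ↦ (f τ - c 0) / q τ) =O[atImInfty] (1 : ℍ → ℝ) := by
    refine isBoundedAtImInfty_of_hasSum_qExpansion (c := fun m ↦ c (m + 1)) hh fun τ ↦ ?_
    have htail := ((hasSum_nat_add_iff' 1).2 (hf τ)).div_const (q τ)
    simp only [smul_eq_mul, Finset.sum_range_one, pow_zero, mul_one, pow_succ, ← mul_assoc] at htail
    simpa only [smul_eq_mul, q, mul_div_cancel_right₀ _ (hq_ne τ)] using htail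
  have hprod : Tendsto (fun τ ↦ q τ * ((f τ - c 0) / q τ)) atImInfty (𝓝 0) :=
    (Asymptotics.isLittleO_one_iff ℝ).1 ((hq.mul_isBigO hquot).congr_right fun _ ↦ one_mul 1)
  refine tendsto_sub_nhds_zero_iff.1 (hprod.congr fun τ ↦ ?_)
  exact mul_div_cancel₀ _ (hq_ne τ)

/-- The derivative is controlled by Cauchy's estimate on discs of radius one. -/
theorem tendsto_normalizedDerivOfComplex_atImInfty {F : ℍ → ℂ} {L : ℂ} (hF : MDiff F)
    (hL : Tendsto F atImInfty (𝓝 L)) :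
    Tendsto (normalizedDerivOfComplex F) atImInfty (𝓝 0) := by
  have hderiv : Tendsto (fun τ : ℍ ↦ deriv (F ∘ ofComplex) τ) atImInfty (𝓝 0) := by
    refine Metric.tendsto_nhds.2 fun ε hε ↦ ?_
    obtain ⟨A, hA⟩ := (atImInfty_mem _).1 (Metric.tendsto_nhds.1 hL (ε / 2) (half_pos hε))
    refine (atImInfty_mem _).2 ⟨max A 0 + 2, fun τ hτ ↦ ?_⟩
    have him (w : ℂ) (hw : w ∈ Metric.closedBall (τ : ℂ) 1) : max A 0 < w.im := by
      have := (abs_le.1 ((abs_im_le_norm (w - τ)).trans (mem_closedBall_iff_norm.1 hw))).1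
      simp only [sub_im, coe_im] at this
      linarith
    have hdiff : DiffContOnCl ℂ (fun w ↦ (F ∘ ofComplex) w - L) (Metric.ball (τ : ℂ) 1) := by
      refine ((UpperHalfPlane.mdifferentiable_iff.1 hF).mono fun w hw ↦ ?_).sub_const L
        |>.diffContOnCl_ball subset_rfl
      exact (le_max_right A 0).trans_lt (him w hw)
    have hbound : ‖deriv (fun w ↦ (F ∘ ofComplex) w - L) τ‖ ≤ ε / 2 / 1 := by
      refine norm_deriv_le_of_forall_mem_sphere_norm_le one_pos hdiff fun w hw ↦ ?_
      have hwim := him w (Metric.sphere_subset_closedBall hw)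
      have hw0 : 0 < w.im := (le_max_right A 0).trans_lt hwim
      have := hA ⟨w, hw0⟩ ((le_max_left A 0).trans hwim.le)
      rw [Function.comp_apply, ofComplex_apply_of_im_pos hw0, ← dist_eq_norm]
      exact this.le
    rw [deriv_sub_const] at hbound
    simpa using! hbound.trans_lt (by linarith)
  exact mul_zero (2 * π * I : ℂ)⁻¹ ▸ hderiv.const_mul _

theorem eq_zero_of_forall_slash_eq_of_tendsto_zero {k : ℤ} (hk : k < 12) {f : ℍ → ℂ}
    (hf : MDiff f) (hslash : ∀ γ : SL(2, ℤ), f ∣[k] γ = f) (h0 : Tendsto f atImInfty (𝓝 0)) :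
    f = 0 := by
  let g : CuspForm 𝒮ℒ k :=
    { toFun := f
      slash_action_eq' := by
        rintro _ ⟨γ, rfl⟩
        exact hslash γ
      holo' := hf
      zero_at_cusps' := by
        intro c hc
        rw [Subgroup.IsArithmetic.isCusp_iff_isCusp_SL2Z] at hc
        rw [OnePoint.isZeroAt_iff_forall_SL2Z hc]
        intro γ _
        rw [hslash]
        exact h0 }
  have hg : g = 0 := rank_zero_iff_forall_zero.1 (CuspForm.rank_eq_zero_of_weight_lt_twelve hk) g
  exact congrArg DFunLike.coe hg

theorem tendsto_E2_atImInfty : Tendsto EisensteinSeries.E2 atImInfty (𝓝 1) :=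
  tendsto_atImInfty_of_hasSum_qExpansion one_pos
    (c := fun m ↦ if m = 0 then 1 else -24 * ArithmeticFunction.sigma 1 m) fun τ ↦ by
    simpa only [Function.Periodic.qParam, ofReal_one, div_one]
      using EisensteinSeries.hasSum_qExpansion_E2 (z := τ)

theorem tendsto_E_atImInfty {k : ℕ} (hk : 3 ≤ k) (hk_even : Even k) :
    Tendsto (ModularForm.E hk) atImInfty (𝓝 1) := by
  simpa only [EisensteinSeries.E_qExpansion_coeff_zero hk hk_even] using
    tendsto_atImInfty_of_hasSum_qExpansion one_pos
      (ModularForm.hasSum_qExpansion (f := ModularForm.E hk) one_pos one_mem_strictPeriods_SL)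

theorem tendsto_E₄_atImInfty : Tendsto E₄ atImInfty (𝓝 1) :=
  tendsto_E_atImInfty _ (by decide)

theorem tendsto_E₆_atImInfty : Tendsto E₆ atImInfty (𝓝 1) :=
  tendsto_E_atImInfty _ (by decide)

theorem mdifferentiable_E₄ : MDiff E₄ := E₄.holo'

theorem mdifferentiable_E₆ : MDiff E₆ := E₆.holo'

theorem E₄_slash (γ : SL(2, ℤ)) : ⇑E₄ ∣[(4 : ℤ)] γ = E₄ := E₄.slash_action_eq' _ ⟨γ, rfl⟩

theorem E₆_slash (γ : SL(2, ℤ)) : ⇑E₆ ∣[(6 : ℤ)] γ = E₆ := E₆.slash_action_eq' _ ⟨γ, rfl⟩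

theorem tendsto_serreDerivative_atImInfty (κ : ℂ) {F : ℍ → ℂ} {L : ℂ} (hF : MDiff F)
    (hL : Tendsto F atImInfty (𝓝 L)) :
    Tendsto (serreDerivative κ F) atImInfty (𝓝 (-(κ / 12) * L)) := by
  have hlim := (tendsto_normalizedDerivOfComplex_atImInfty hF hL).sub
    ((tendsto_E2_atImInfty.const_mul (κ * 12⁻¹)).mul hL)
  rwa [show 0 - κ * 12⁻¹ * 1 * L = -(κ / 12) * L by ring] at hlim

/-- In weight less than twelve a level-one form is determined by its value at `i∞`. -/
theorem serreDerivative_eq_mul_of_tendsto_one {k : ℤ} (hk : k < 12) {κ : ℂ} {F G : ℍ → ℂ}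
    (hF : MDiff F) (hG : MDiff G) (hF_lim : Tendsto F atImInfty (𝓝 1))
    (hG_lim : Tendsto G atImInfty (𝓝 1))
    (hF_slash : ∀ γ : SL(2, ℤ), serreDerivative κ F ∣[k] γ = serreDerivative κ F)
    (hG_slash : ∀ γ : SL(2, ℤ), G ∣[k] γ = G) (τ : ℍ) :
    serreDerivative κ F τ = -(κ / 12) * G τ := by
  have hzero : serreDerivative κ F + (κ / 12) • G = 0 := by
    refine eq_zero_of_forall_slash_eq_of_tendsto_zero hk
      ((serreDerivative_mdifferentiable κ hF).add (hG.const_smul _)) (fun γ ↦ ?_) ?_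
    · rw [SlashAction.add_slash, ModularForm.SL_smul_slash, hF_slash, hG_slash]
    · have hlim := (tendsto_serreDerivative_atImInfty κ hF hF_lim).add (hG_lim.const_smul (κ / 12))
      rwa [smul_eq_mul, neg_mul, neg_add_cancel] at hlim
  rw [neg_mul]
  exact eq_neg_of_add_eq_zero_left (congrFun hzero τ)

theorem normalizedDerivOfComplex_E₄ (τ : ℍ) :
    normalizedDerivOfComplex E₄ τ = (EisensteinSeries.E2 τ * E₄ τ - E₆ τ) / 3 := by
  have hserre := serreDerivative_eq_mul_of_tendsto_one (k := 6) (κ := 4) (by norm_num)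
    mdifferentiable_E₄ mdifferentiable_E₆ tendsto_E₄_atImInfty tendsto_E₆_atImInfty
    (fun γ ↦ serreDerivative_slash_invariant (k := 4) mdifferentiable_E₄ (E₄_slash γ)) E₆_slash τ
  rw [serreDerivative_apply] at hserre
  linear_combination hserre

theorem normalizedDerivOfComplex_E₆ (τ : ℍ) :
    normalizedDerivOfComplex E₆ τ = (EisensteinSeries.E2 τ * E₆ τ - E₄ τ ^ 2) / 2 := by
  have hsq_slash (γ : SL(2, ℤ)) : (⇑E₄ * ⇑E₄) ∣[(8 : ℤ)] γ = ⇑E₄ * ⇑E₄ :=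
    (ModularForm.mul_slash_SL2 4 4 γ E₄ E₄).trans (by rw [E₄_slash])
  have hserre := serreDerivative_eq_mul_of_tendsto_one (k := 8) (κ := 6) (by norm_num)
    mdifferentiable_E₆ (mdifferentiable_E₄.mul mdifferentiable_E₄) tendsto_E₆_atImInfty
    (by simpa using! tendsto_E₄_atImInfty.mul tendsto_E₄_atImInfty)
    (fun γ ↦ serreDerivative_slash_invariant (k := 6) mdifferentiable_E₆ (E₆_slash γ)) hsq_slash τ
  rw [serreDerivative_apply, Pi.mul_apply] at hserre
  linear_combination hserre

theorem hasDerivAt_D2_comp_ofComplex (γ : SL(2, ℤ)) (τ : ℍ) :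
    HasDerivAt (EisensteinSeries.D2 γ ∘ ofComplex)
      (-(2 * π * I) * (γ 1 0 / denom γ τ) ^ 2) τ := by
  have hzpow : HasDerivAt (fun w : ℂ ↦ 2 * π * I * γ 1 0 * denom γ w ^ (-1 : ℤ))
      (2 * π * I * γ 1 0 * (-1 * (γ 1 0 : ℂ) * denom γ τ ^ (-1 - 1 : ℤ))) τ := by
    simpa using (hasDerivAt_denom_zpow γ (-1) τ).const_mul (2 * π * I * γ 1 0 : ℂ)
  have heq : (EisensteinSeries.D2 γ ∘ ofComplex) =ᶠ[𝓝 (τ : ℂ)]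
      fun w : ℂ ↦ 2 * π * I * γ 1 0 * denom γ w ^ (-1 : ℤ) := by
    filter_upwards [isOpen_upperHalfPlaneSet.mem_nhds τ.im_pos] with w hw
    simp only [Function.comp_apply, EisensteinSeries.D2, ofComplex_apply_of_im_pos hw,
      zpow_neg_one, div_eq_mul_inv]
  refine (hzpow.congr_of_eventuallyEq heq).congr_deriv ?_
  rw [show (-1 - 1 : ℤ) = -(2 : ℕ) by norm_num, zpow_neg, zpow_natCast, div_pow]
  ring

theorem mdifferentiable_D2 (γ : SL(2, ℤ)) : MDiff (EisensteinSeries.D2 γ) := fun τ ↦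
  UpperHalfPlane.mdifferentiableAt_iff.2 (hasDerivAt_D2_comp_ofComplex γ τ).differentiableAt

theorem normalizedDerivOfComplex_D2 (γ : SL(2, ℤ)) (τ : ℍ) :
    normalizedDerivOfComplex (EisensteinSeries.D2 γ) τ =
      1 / (24 * riemannZeta 2) * EisensteinSeries.D2 γ τ ^ 2 := by
  have hπ : (π : ℂ) ≠ 0 := ofReal_ne_zero.2 Real.pi_ne_zero
  rw [normalizedDerivOfComplex, (hasDerivAt_D2_comp_ofComplex γ τ).deriv, EisensteinSeries.D2,
    riemannZeta_two]
  field_simp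
  rw [I_sq]
  ring

/-- `E₂` is only quasimodular, but the correction terms of `D E₂` and `E₂² / 12` cancel. -/
theorem serreDerivative_one_E2_slash (γ : SL(2, ℤ)) :
    serreDerivative 1 EisensteinSeries.E2 ∣[(4 : ℤ)] γ =
      serreDerivative 1 EisensteinSeries.E2 := by
  have hsplit : serreDerivative 1 EisensteinSeries.E2 = serreDerivative 2 EisensteinSeries.E2
      + (1 / 12 : ℂ) • (EisensteinSeries.E2 * EisensteinSeries.E2) := by
    ext τ
    simp only [Pi.add_apply, Pi.smul_apply, Pi.mul_apply, serreDerivative_apply, smul_eq_mul]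
    ring
  have hserre := serreDerivative_slash_equivariant (k := 2) E2_mdifferentiable (γ := γ)
  have hsq := ModularForm.mul_slash_SL2 2 2 γ EisensteinSeries.E2 EisensteinSeries.E2
  rw [EisensteinSeries.E2_slash_action] at hserre hsq
  rw [serreDerivative_sub _ _ _ E2_mdifferentiable ((mdifferentiable_D2 γ).const_smul _),
    serreDerivative_smul _ _ _ (mdifferentiable_D2 γ)] at hserre
  norm_num only at hserre hsq
  rw [hsplit, SlashAction.add_slash, ModularForm.SL_smul_slash, hsq, hserre]
  ext τ
  simp only [Pi.add_apply, Pi.sub_apply, Pi.smul_apply, Pi.mul_apply, serreDerivative_apply,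
    smul_eq_mul, normalizedDerivOfComplex_D2]
  ring

theorem normalizedDerivOfComplex_E2 (τ : ℍ) :
    normalizedDerivOfComplex EisensteinSeries.E2 τ =
      (EisensteinSeries.E2 τ ^ 2 - E₄ τ) / 12 := by
  have hserre := serreDerivative_eq_mul_of_tendsto_one (k := 4) (κ := 1) (by norm_num)
    E2_mdifferentiable mdifferentiable_E₄ tendsto_E2_atImInfty tendsto_E₄_atImInfty
    serreDerivative_one_E2_slash E₄_slash τ
  rw [serreDerivative_apply] at hserre
  linear_combination hserre

/-- The second Eisenstein series `E₂(q) = 1 - 24 ∑ σ₁(n) qⁿ`, which completes `E4`, `E6` to a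
system closed under `q d/dq`. -/
noncomputable def E2 (q : ℝ) : ℝ :=
  1 - 24 * ∑' n : ℕ, (ArithmeticFunction.sigma 1 (n + 1) : ℝ) * q ^ (n + 1)

/-- A point of the upper half-plane with nome `q`, i.e. a solution `τ` of `exp (2πiτ) = q`; it is
meaningful for `0 < q < 1` and an arbitrary point of the half-plane otherwise. -/
noncomputable def ofNome (q : ℝ) : ℍ := ofComplex (Function.Periodic.invQParam 1 q)

theorem coe_ofNome {q : ℝ} (hq : q ∈ Set.Ioo 0 1) :
    (ofNome q : ℂ) = Function.Periodic.invQParam 1 q := by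
  have him : 0 < im (Function.Periodic.invQParam 1 (q : ℂ)) :=
    Function.Periodic.im_invQParam_pos_of_norm_lt_one one_pos
      (by simpa [abs_of_pos hq.1] using hq.2) (ofReal_ne_zero.2 hq.1.ne')
  rw [ofNome, ofComplex_apply_of_im_pos him]

theorem qParam_ofNome {q : ℝ} (hq : q ∈ Set.Ioo 0 1) :
    Function.Periodic.qParam 1 (ofNome q) = q := by
  rw [coe_ofNome hq, Function.Periodic.qParam_right_inv one_ne_zero (ofReal_ne_zero.2 hq.1.ne')]

theorem cexp_ofNome {q : ℝ} (hq : q ∈ Set.Ioo 0 1) : cexp (2 * π * I * ofNome q) = q := by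
  simpa only [Function.Periodic.qParam, ofReal_one, div_one] using qParam_ofNome hq

theorem ofNome_exp_neg_two_pi : ofNome (Real.exp (-2 * π)) = UpperHalfPlane.I := by
  ext
  rw [coe_ofNome ⟨Real.exp_pos _, Real.exp_lt_one_iff.2 (by linarith [Real.pi_pos])⟩,
    Function.Periodic.invQParam, ← ofReal_log (Real.exp_pos _).le, Real.log_exp, coe_I]
  have hπ : (π : ℂ) ≠ 0 := ofReal_ne_zero.2 Real.pi_ne_zero
  push_cast
  field_simp
  linear_combination -I_sq

theorem tendsto_ofNome : Tendsto ofNome (𝓝[>] 0) atImInfty := by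
  have hcoe : Tendsto ((↑) : ℝ → ℂ) (𝓝[>] 0) (𝓝[≠] 0) :=
    tendsto_nhdsWithin_iff.2 ⟨(continuous_ofReal.tendsto' 0 0 ofReal_zero).mono_left
      nhdsWithin_le_nhds, eventually_mem_nhdsWithin.mono fun q hq ↦
        ofReal_ne_zero.2 (Set.mem_Ioi.1 hq).ne'⟩
  exact tendsto_comap_im_ofComplex.comp ((Function.Periodic.invQParam_tendsto one_pos).comp hcoe)

theorem ofReal_tsum_sigma_mul_pow (k : ℕ) {q : ℝ} (hq : q ∈ Set.Ioo 0 1) :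
    ((∑' n : ℕ, (ArithmeticFunction.sigma k (n + 1) : ℝ) * q ^ (n + 1) : ℝ) : ℂ) =
      ∑' n : ℕ+, ArithmeticFunction.sigma k n * cexp (2 * π * I * ofNome q) ^ (n : ℕ) := by
  rw [cexp_ofNome hq, ofReal_tsum,
    tsum_pnat_eq_tsum_succ (f := fun n ↦ (ArithmeticFunction.sigma k n : ℂ) * (q : ℂ) ^ n)]
  push_cast
  rfl

theorem ofReal_E2 {q : ℝ} (hq : q ∈ Set.Ioo 0 1) :
    (E2 q : ℂ) = EisensteinSeries.E2 (ofNome q) := by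
  rw [E2, EisensteinSeries.E2_eq_tsum_cexp, ← ofReal_tsum_sigma_mul_pow 1 hq]
  push_cast
  rfl

theorem ofReal_E4 {q : ℝ} (hq : q ∈ Set.Ioo 0 1) : (E4 q : ℂ) = E₄ (ofNome q) := by
  have hseries := ofReal_tsum_sigma_mul_pow 3 hq
  simp only [ArithmeticFunction.sigma_apply] at hseries
  rw [E₄, EisensteinSeries.q_expansion_bernoulli _ (by decide), E4]
  simp only [zpow_natCast, sigma3, ofReal_add, ofReal_mul, hseries, ArithmeticFunction.sigma_apply]
  norm_num [show bernoulli 4 = -1 / 30 by decide +kernel]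

theorem ofReal_E6 {q : ℝ} (hq : q ∈ Set.Ioo 0 1) : (E6 q : ℂ) = E₆ (ofNome q) := by
  have hseries := ofReal_tsum_sigma_mul_pow 5 hq
  simp only [ArithmeticFunction.sigma_apply] at hseries
  rw [E₆, EisensteinSeries.q_expansion_bernoulli _ (by decide), E6]
  simp only [zpow_natCast, sigma5, ofReal_sub, ofReal_mul, hseries, ArithmeticFunction.sigma_apply]
  norm_num [show bernoulli 6 = 1 / 42 by decide +kernel]

theorem tendsto_of_ofReal_eq {f : ℝ → ℝ} {F : ℍ → ℂ} {L : ℝ} (hF : Tendsto F atImInfty (𝓝 L))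
    (hfF : ∀ q ∈ Set.Ioo (0 : ℝ) 1, (f q : ℂ) = F (ofNome q)) : Tendsto f (𝓝[>] 0) (𝓝 L) := by
  have hlim : Tendsto (fun q ↦ (F (ofNome q)).re) (𝓝[>] 0) (𝓝 L) :=
    (Complex.continuous_re.tendsto _).comp (hF.comp tendsto_ofNome)
  refine hlim.congr' ?_
  filter_upwards [Ioo_mem_nhdsGT one_pos] with q hq
  rw [← hfF q hq, ofReal_re]

/-- Under `q = exp (2πiτ)` the operator `q d/dq` becomes `(2πi)⁻¹ d/dτ`. -/
theorem hasDerivAt_of_ofReal_eq {f : ℝ → ℝ} {F : ℍ → ℂ} {d q : ℝ} (hF : MDiff F)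
    (hq : q ∈ Set.Ioo 0 1) (hfF : ∀ t ∈ Set.Ioo (0 : ℝ) 1, (f t : ℂ) = F (ofNome t))
    (hd : (d : ℂ) = normalizedDerivOfComplex F (ofNome q)) : HasDerivAt f (d / q) q := by
  have hlog : HasDerivAt (Function.Periodic.invQParam 1) (1 / (2 * π * I) * (q : ℂ)⁻¹) (q : ℂ) :=
    ((hasDerivAt_log (ofReal_mem_slitPlane.2 hq.1)).const_mul _).congr_deriv (by norm_num)
  have hF' : HasDerivAt (F ∘ ofComplex) (2 * π * I * d) (Function.Periodic.invQParam 1 q) := by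
    rw [← coe_ofNome hq, hd, normalizedDerivOfComplex, mul_inv_cancel_left₀ two_pi_I_ne_zero]
    exact (UpperHalfPlane.mdifferentiableAt_iff.1 (hF _)).hasDerivAt
  have hcomp := (hF'.comp (q : ℂ) hlog).real_of_complex
  have hval : (2 * π * I * d * (1 / (2 * π * I) * (q : ℂ)⁻¹)).re = d / q := by
    rw [← ofReal_re (d / q)]
    congr 1
    have := two_pi_I_ne_zero
    push_cast
    field_simp
  rw [hval] at hcomp
  refine hcomp.congr_of_eventuallyEq ?_
  filter_upwards [Ioo_mem_nhds hq.1 hq.2] with t ht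
  simp only [Function.comp_apply]
  rw [← ofReal_re (f t), hfF t ht, ofNome]

theorem tendsto_E2_zero : Tendsto E2 (𝓝[>] 0) (𝓝 1) :=
  tendsto_of_ofReal_eq (by exact_mod_cast tendsto_E2_atImInfty) fun _ ↦ ofReal_E2

theorem tendsto_E4_zero : Tendsto E4 (𝓝[>] 0) (𝓝 1) :=
  tendsto_of_ofReal_eq (by exact_mod_cast tendsto_E₄_atImInfty) fun _ ↦ ofReal_E4

theorem tendsto_E6_zero : Tendsto E6 (𝓝[>] 0) (𝓝 1) :=
  tendsto_of_ofReal_eq (by exact_mod_cast tendsto_E₆_atImInfty) fun _ ↦ ofReal_E6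

theorem hasDerivAt_E2 {q : ℝ} (hq : q ∈ Set.Ioo 0 1) :
    HasDerivAt E2 ((E2 q ^ 2 - E4 q) / 12 / q) q :=
  hasDerivAt_of_ofReal_eq E2_mdifferentiable hq (fun _ ↦ ofReal_E2) <| by
    rw [normalizedDerivOfComplex_E2, ← ofReal_E2 hq, ← ofReal_E4 hq]
    push_cast
    rfl

theorem hasDerivAt_E4 {q : ℝ} (hq : q ∈ Set.Ioo 0 1) :
    HasDerivAt E4 ((E2 q * E4 q - E6 q) / 3 / q) q :=
  hasDerivAt_of_ofReal_eq mdifferentiable_E₄ hq (fun _ ↦ ofReal_E4) <| by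
    rw [normalizedDerivOfComplex_E₄, ← ofReal_E2 hq, ← ofReal_E4 hq, ← ofReal_E6 hq]
    push_cast
    rfl

theorem hasDerivAt_E6 {q : ℝ} (hq : q ∈ Set.Ioo 0 1) :
    HasDerivAt E6 ((E2 q * E6 q - E4 q ^ 2) / 2 / q) q :=
  hasDerivAt_of_ofReal_eq mdifferentiable_E₆ hq (fun _ ↦ ofReal_E6) <| by
    rw [normalizedDerivOfComplex_E₆, ← ofReal_E2 hq, ← ofReal_E4 hq, ← ofReal_E6 hq]
    push_cast
    rfl

theorem ofReal_etaQ_pow {q : ℝ} (hq : q ∈ Set.Ioo 0 1) :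
    ((etaQ q ^ 24 : ℝ) : ℂ) = discriminant (ofNome q) := by
  have hmul : Multipliable fun n : ℕ ↦ 1 - q ^ (n + 1) := by
    have hsum := ((summable_nat_add_iff 1).2 (summable_geometric_of_lt_one hq.1.le hq.2)).norm
    simpa only [sub_eq_add_neg] using
      multipliable_one_add_of_summable (f := fun n : ℕ ↦ -q ^ (n + 1)) (by simpa using hsum)
  have hprod : ((∏' n : ℕ, (1 - q ^ (n + 1)) : ℝ) : ℂ) = ∏' n : ℕ, (1 - (q : ℂ) ^ (n + 1)) := by
    simpa using hmul.map_tprod Complex.ofRealHom continuous_ofReal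
  have hrpow : (q ^ ((1 : ℝ) / 24)) ^ 24 = q := by
    rw [← Real.rpow_natCast, ← Real.rpow_mul hq.1.le]
    norm_num
  have hnorm : ‖(q : ℂ)‖ < 1 := by simpa [abs_of_pos hq.1] using hq.2
  rw [discriminant_eq_q_prod, qParam_ofNome hq, etaQ, mul_pow, hrpow, ofReal_mul, ofReal_pow,
    hprod, ← (multipliable_one_sub_pow hnorm).tprod_pow]
  simp only [eta_q_eq_pow, cexp_ofNome hq]

theorem etaQ_ne_zero {q : ℝ} (hq : q ∈ Set.Ioo 0 1) : etaQ q ≠ 0 := by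
  have hΔ := discriminant_ne_zero (ofNome q)
  rw [← ofReal_etaQ_pow hq] at hΔ
  exact ne_zero_pow (by norm_num) (ofReal_ne_zero.1 hΔ)

theorem etaQ_pow_eq {q : ℝ} (hq : q ∈ Set.Ioo 0 1) :
    1728 * etaQ q ^ 24 = E4 q ^ 3 - E6 q ^ 2 := by
  have hΔ := discriminant_eq_E₄_cube_sub_E₆_sq (ofNome q)
  rw [← ofReal_etaQ_pow hq, ← ofReal_E4 hq, ← ofReal_E6 hq, eq_div_iff (by norm_num)] at hΔ
  have hΔ' : etaQ q ^ 24 * 1728 = E4 q ^ 3 - E6 q ^ 2 := by exact_mod_cast hΔ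
  rw [mul_comm, hΔ']

/-- The weight of `E₆` is `2` modulo `4`, and `S` fixes `i` with automorphy factor `i`. -/
theorem E₆_I : E₆ UpperHalfPlane.I = 0 := by
  have hfix : ModularGroup.S • UpperHalfPlane.I = UpperHalfPlane.I := by
    rw [UpperHalfPlane.modular_S_smul]
    ext
    simp
  have hslash := congrFun (E₆_slash ModularGroup.S) UpperHalfPlane.I
  rw [ModularForm.SL_slash_apply, hfix, ModularGroup.denom_S, coe_I] at hslash
  have hpow : I ^ (-6 : ℤ) = -1 := by
    rw [zpow_neg, show (6 : ℤ) = 4 + 2 by norm_num, zpow_add₀ I_ne_zero]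
    norm_cast
    rw [I_pow_four, I_sq]
    norm_num
  rw [hpow] at hslash
  linear_combination (-1 / 2) * hslash

end RamanujanIdentities

theorem Ioo_exp_subset : Set.Ioo 0 (rexp (-2 * π)) ⊆ Set.Ioo 0 1 :=
  Set.Ioo_subset_Ioo_right (Real.exp_le_one_iff.2 (by linarith [Real.pi_pos]))

theorem E6_exp_neg_two_pi : E6 (rexp (-2 * π)) = 0 := by
  have hmem : rexp (-2 * π) ∈ Set.Ioo 0 1 :=
    ⟨Real.exp_pos _, Real.exp_lt_one_iff.2 (by linarith [Real.pi_pos])⟩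
  have hI := ofReal_E6 hmem
  rw [ofNome_exp_neg_two_pi, E₆_I] at hI
  exact_mod_cast hI

theorem summable_sigma_mul_pow (k : ℕ) {q : ℝ} (hq : q ∈ Set.Ioo 0 1) :
    Summable fun n : ℕ ↦ (ArithmeticFunction.sigma k (n + 1) : ℝ) * q ^ (n + 1) := by
  refine (summable_nat_add_iff (f := fun n ↦ (ArithmeticFunction.sigma k n : ℝ) * q ^ n) 1).2 ?_
  refine Summable.of_nonneg_of_le (fun n ↦ mul_nonneg (Nat.cast_nonneg _) (pow_nonneg hq.1.le n))
    (fun n ↦ ?_) (summable_pow_mul_geometric_of_norm_lt_one (k + 1)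
      (by simpa [abs_of_pos hq.1] using hq.2 : ‖q‖ < 1))
  exact mul_le_mul_of_nonneg_right (mod_cast ArithmeticFunction.sigma_le_pow_succ k n)
    (pow_nonneg hq.1.le n)

theorem strictAntiOn_E6 : StrictAntiOn E6 (Set.Ioo 0 1) := by
  intro q hq t ht hqt
  have hsum {s : ℝ} (hs : s ∈ Set.Ioo 0 1) :
      Summable fun n : ℕ ↦ (sigma5 (n + 1) : ℝ) * s ^ (n + 1) := by
    simpa only [sigma5, ArithmeticFunction.sigma_apply] using summable_sigma_mul_pow 5 hs
  have hlt : ∑' n : ℕ, (sigma5 (n + 1) : ℝ) * q ^ (n + 1) <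
      ∑' n : ℕ, (sigma5 (n + 1) : ℝ) * t ^ (n + 1) := by
    refine Summable.tsum_lt_tsum (i := 0) (fun n ↦ ?_) (by simpa [sigma5] using hqt)
      (hsum hq) (hsum ht)
    have := hq.1.le
    gcongr
  rw [E6, E6]
  linarith

theorem E6_pos {q : ℝ} (hq : q ∈ Set.Ioo 0 (rexp (-2 * π))) : 0 < E6 q := by
  rw [← E6_exp_neg_two_pi]
  exact strictAntiOn_E6 (Ioo_exp_subset hq)
    ⟨Real.exp_pos _, Real.exp_lt_one_iff.2 (by linarith [Real.pi_pos])⟩ hq.2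

theorem E4_pos {q : ℝ} (hq : 0 ≤ q) : 0 < E4 q := by
  have : 0 ≤ ∑' n : ℕ, (sigma3 (n + 1) : ℝ) * q ^ (n + 1) := tsum_nonneg fun n ↦ by positivity
  rw [E4]
  positivity

theorem z1_eq {q : ℝ} (hq : q ∈ Set.Ioo 0 1) : z1 q = 1 - E6 q ^ 2 / E4 q ^ 3 := by
  have := (E4_pos hq.1.le).ne'
  rw [z1, etaQ_pow_eq hq]
  field_simp

theorem z1_pos {q : ℝ} (hq : q ∈ Set.Ioo 0 1) : 0 < z1 q :=
  div_pos (mul_pos (by norm_num) ((by decide : Even 24).pow_pos (etaQ_ne_zero hq)))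
    (pow_pos (E4_pos hq.1.le) 3)

theorem z1_mem_Ioo {q : ℝ} (hq : q ∈ Set.Ioo 0 (rexp (-2 * π))) : z1 q ∈ Set.Ioo 0 1 := by
  refine ⟨z1_pos (Ioo_exp_subset hq), ?_⟩
  rw [z1_eq (Ioo_exp_subset hq)]
  exact sub_lt_self _ (div_pos (pow_pos (E6_pos hq) 2) (pow_pos (E4_pos hq.1.le) 3))

section Hypergeometric

open Filter Topology Asymptotics

/-- The coefficients of the series `F1 x`. -/
noncomputable def frobeniusCoeff (x : ℝ) (n : ℕ) : ℝ :=
  (ascPochhammer ℝ n).eval (1 / 2 + x) * (ascPochhammer ℝ n).eval (1 / 6 + x) *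
    (ascPochhammer ℝ n).eval (5 / 6 + x) / (ascPochhammer ℝ n).eval (1 + x) ^ 3

/-- The function `θᵏ F1 x`, where `θ = z d/dz`. -/
noncomputable def thetaF1 (x : ℝ) (k : ℕ) : ℝ → ℝ :=
  rpowSeries x fun n ↦ (n + x) ^ k * frobeniusCoeff x n

variable {x z : ℝ}

theorem frobeniusCoeff_zero (x : ℝ) : frobeniusCoeff x 0 = 1 := by simp [frobeniusCoeff]

theorem frobeniusCoeff_succ (x : ℝ) (n : ℕ) :
    frobeniusCoeff x (n + 1) = frobeniusCoeff x n *
      ((n + x + 1 / 2) * (n + x + 1 / 6) * (n + x + 5 / 6) / (n + x + 1) ^ 3) := by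
  simp only [frobeniusCoeff, ascPochhammer_succ_eval, div_mul_div_comm]
  ring

theorem frobeniusCoeff_mem_Icc (hx : 0 ≤ x) (n : ℕ) : frobeniusCoeff x n ∈ Set.Icc 0 1 := by
  induction n with
  | zero => simp [frobeniusCoeff_zero]
  | succ n ih =>
    rw [frobeniusCoeff_succ]
    refine ⟨mul_nonneg ih.1 (by positivity), mul_le_one₀ ih.2 (by positivity) ?_⟩
    rw [div_le_one (by positivity), pow_three']
    gcongr <;> norm_num

theorem isBigO_add_pow_mul_frobeniusCoeff (hx : 0 ≤ x) (k : ℕ) :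
    (fun n : ℕ ↦ (n + x) ^ k * frobeniusCoeff x n) =O[atTop] fun n ↦ ((n ^ k : ℕ) : ℝ) := by
  induction k with
  | zero =>
    refine .of_bound' (.of_forall fun n ↦ ?_)
    obtain ⟨h0, h1⟩ := frobeniusCoeff_mem_Icc hx n
    simpa [abs_of_nonneg h0] using h1
  | succ k ih => simpa only [pow_succ', mul_assoc] using isBigO_natCast_add_mul x ih

theorem thetaF1_zero (hz : 0 < z) : thetaF1 x 0 z = F1 x z := by
  rw [thetaF1, rpowSeries_eq_tsum hz, F1]
  refine tsum_congr fun n ↦ ?_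
  rw [frobeniusCoeff]
  ring

theorem hasDerivAt_thetaF1 (hx : 0 ≤ x) (k : ℕ) (hz : z ∈ Set.Ioo 0 1) :
    HasDerivAt (thetaF1 x k) (thetaF1 x (k + 1) z / z) z := by
  simpa only [thetaF1, pow_succ', mul_assoc] using!
    hasDerivAt_rpowSeries (isBigO_add_pow_mul_frobeniusCoeff hx k) hz

theorem tendsto_thetaF1_zero (k : ℕ) : Tendsto (thetaF1 0 k) (𝓝 0) (𝓝 (0 ^ k)) := by
  simpa [thetaF1, frobeniusCoeff_zero] using!
    tendsto_rpowSeries_zero (isBigO_add_pow_mul_frobeniusCoeff le_rfl k)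

/-- The hypergeometric operator `θ³ - z (θ + 1/2) (θ + 1/6) (θ + 5/6)`, evaluated at `z` on a
function whose `θ`-derivative of order `k` at `z` is `u k`. -/
noncomputable def hypergeometricOp (u : ℕ → ℝ) (z : ℝ) : ℝ :=
  u 3 - z * (u 3 + 3 / 2 * u 2 + 23 / 36 * u 1 + 5 / 72 * u 0)

/-- Frobenius' method: the recurrence of the coefficients cancels every term but the first. -/
theorem hypergeometricOp_thetaF1 (hx : 0 ≤ x) (hz : z ∈ Set.Ioo 0 1) :
    hypergeometricOp (fun k ↦ thetaF1 x k z) z = x ^ 3 * z ^ x := by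
  have hz1 : ‖z‖ < 1 := (norm_of_nonneg hz.1.le).trans_lt hz.2
  have hsum (k : ℕ) := (summable_norm_mul_geometric_of_norm_lt_one' hz1
    (isBigO_add_pow_mul_frobeniusCoeff hx k)).of_norm.hasSum
  have hrec (n : ℕ) : ((n + 1 : ℕ) + x) ^ 3 * frobeniusCoeff x (n + 1) * z ^ (n + 1) =
      z * ((n + x) ^ 3 * frobeniusCoeff x n * z ^ n +
        3 / 2 * ((n + x) ^ 2 * frobeniusCoeff x n * z ^ n) +
        23 / 36 * ((n + x) ^ 1 * frobeniusCoeff x n * z ^ n) +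
        5 / 72 * ((n + x) ^ 0 * frobeniusCoeff x n * z ^ n)) := by
    have : (n : ℝ) + x + 1 ≠ 0 := by positivity
    rw [frobeniusCoeff_succ, Nat.cast_succ, add_right_comm]
    field_simp
    ring
  have hshift := ((((hsum 3).add ((hsum 2).mul_left (3 / 2))).add
    ((hsum 1).mul_left (23 / 36))).add ((hsum 0).mul_left (5 / 72))).mul_left z
  have hsplit := (hsum 3).summable.tsum_eq_zero_add
  rw [tsum_congr hrec, hshift.tsum_eq, frobeniusCoeff_zero, Nat.cast_zero, zero_add] at hsplit
  simp only [hypergeometricOp, thetaF1, rpowSeries]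
  linear_combination z ^ x * hsplit

end Hypergeometric

section Pullback

open Filter Topology

/-- The logarithmic derivative `D z₁ / z₁`, where `D = q d/dq`. -/
noncomputable def logDerivZ1 (q : ℝ) : ℝ := E6 q / E4 q

theorem E6_eq_logDerivZ1_mul {q : ℝ} (hq : 0 ≤ q) : E6 q = logDerivZ1 q * E4 q :=
  (div_mul_cancel₀ _ (E4_pos hq).ne').symm

theorem hasDerivAt_logDerivZ1 {q : ℝ} (hq : q ∈ Set.Ioo 0 1) : HasDerivAt logDerivZ1
    ((E2 q * logDerivZ1 q / 6 - E4 q / 2 + logDerivZ1 q ^ 2 / 3) / q) q := by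
  have hE4 := (E4_pos hq.1.le).ne'
  refine ((hasDerivAt_E6 hq).div (hasDerivAt_E4 hq) hE4).congr_deriv ?_
  rw [logDerivZ1]
  field_simp
  ring

theorem z1_eq_one_sub_logDerivZ1 {q : ℝ} (hq : q ∈ Set.Ioo 0 1) :
    z1 q = 1 - logDerivZ1 q ^ 2 / E4 q := by
  have hE4 := (E4_pos hq.1.le).ne'
  rw [z1_eq hq, E6_eq_logDerivZ1_mul hq.1.le]
  field_simp

theorem hasDerivAt_z1 {q : ℝ} (hq : q ∈ Set.Ioo 0 1) :
    HasDerivAt z1 (z1 q * logDerivZ1 q / q) q := by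
  have hE4 := (E4_pos hq.1.le).ne'
  have hquot := (((hasDerivAt_logDerivZ1 hq).fun_pow 2).fun_div (hasDerivAt_E4 hq) hE4).const_sub 1
  refine (hquot.congr_of_eventuallyEq ?_).congr_deriv ?_
  · filter_upwards [Ioo_mem_nhds hq.1 hq.2] with t ht using z1_eq_one_sub_logDerivZ1 ht
  · rw [z1_eq_one_sub_logDerivZ1 hq, E6_eq_logDerivZ1_mul hq.1.le]
    field_simp
    ring

theorem hasDerivAt_inv_sqrt_E4 {q : ℝ} (hq : q ∈ Set.Ioo 0 1) :
    HasDerivAt (fun t ↦ (√(E4 t))⁻¹) (-((√(E4 q))⁻¹ * (E2 q - logDerivZ1 q) / 6) / q) q := by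
  have hE4 := E4_pos hq.1.le
  have hsqrt := sqrt_pos.2 hE4
  refine (((hasDerivAt_E4 hq).sqrt hE4.ne').fun_inv hsqrt.ne').congr_deriv ?_
  rw [logDerivZ1, sq_sqrt hE4.le]
  field_simp
  ring

/-- `u k` is the `k`-th iterated `θ`-derivative of `u 0` on `(0, 1)`, where `θ = z d/dz`. -/
def IsThetaTower (u : ℕ → ℝ → ℝ) : Prop :=
  ∀ k, ∀ z ∈ Set.Ioo (0 : ℝ) 1, HasDerivAt (u k) (u (k + 1) z / z) z

theorem isThetaTower_thetaF1 {x : ℝ} (hx : 0 ≤ x) : IsThetaTower (thetaF1 x) :=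
  fun k _ ↦ hasDerivAt_thetaF1 hx k

/-- The pullback `u₀(z₁) / √E₄` of `u 0`, normalized to have weight `-2`. -/
noncomputable def pullback (u : ℕ → ℝ → ℝ) (q : ℝ) : ℝ := (√(E4 q))⁻¹ * u 0 (z1 q)

/-- The derivative `q d/dq` of `pullback u`. -/
noncomputable def pullbackDeriv (u : ℕ → ℝ → ℝ) (q : ℝ) : ℝ :=
  (√(E4 q))⁻¹ * (u 1 (z1 q) * logDerivZ1 q - u 0 (z1 q) * ((E2 q - logDerivZ1 q) / 6))

/-- The second derivative `(q d/dq)²` of `pullback u`. -/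
noncomputable def pullbackDeriv₂ (u : ℕ → ℝ → ℝ) (q : ℝ) : ℝ :=
  (√(E4 q))⁻¹ * (u 2 (z1 q) * logDerivZ1 q ^ 2 +
    u 1 (z1 q) * (2 / 3 * logDerivZ1 q ^ 2 - E2 q * logDerivZ1 q / 6 - E4 q / 2) +
    u 0 (z1 q) * (E2 q ^ 2 / 72 - E2 q * logDerivZ1 q / 36 + logDerivZ1 q ^ 2 / 12 -
      5 / 72 * E4 q))

variable {u : ℕ → ℝ → ℝ} {q : ℝ}

theorem IsThetaTower.hasDerivAt_comp_z1 (hu : IsThetaTower u) (k : ℕ)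
    (hq : q ∈ Set.Ioo 0 (rexp (-2 * π))) :
    HasDerivAt (fun t ↦ u k (z1 t)) (u (k + 1) (z1 q) * logDerivZ1 q / q) q := by
  have hz := (z1_mem_Ioo hq).1.ne'
  refine ((hu k _ (z1_mem_Ioo hq)).comp q (hasDerivAt_z1 (Ioo_exp_subset hq))).congr_deriv ?_
  field_simp

theorem IsThetaTower.hasDerivAt_pullback (hu : IsThetaTower u)
    (hq : q ∈ Set.Ioo 0 (rexp (-2 * π))) :
    HasDerivAt (pullback u) (pullbackDeriv u q / q) q := by
  refine ((hasDerivAt_inv_sqrt_E4 (Ioo_exp_subset hq)).mul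
    (hu.hasDerivAt_comp_z1 0 hq)).congr_deriv ?_
  rw [pullbackDeriv]
  ring

theorem IsThetaTower.hasDerivAt_pullbackDeriv (hu : IsThetaTower u)
    (hq : q ∈ Set.Ioo 0 (rexp (-2 * π))) :
    HasDerivAt (pullbackDeriv u) (pullbackDeriv₂ u q / q) q := by
  have hq1 := Ioo_exp_subset hq
  have hρ := hasDerivAt_logDerivZ1 hq1
  have h₁ := (hu.hasDerivAt_comp_z1 1 hq).fun_mul hρ
  have h₀ := (hu.hasDerivAt_comp_z1 0 hq).fun_mul (((hasDerivAt_E2 hq1).fun_sub hρ).div_const 6)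
  refine ((hasDerivAt_inv_sqrt_E4 hq1).mul (h₁.fun_sub h₀)).congr_deriv ?_
  rw [pullbackDeriv₂]
  ring

/-- Here Ramanujan's identities cancel the quasimodular `E₂`, and `z₁ = 1 - E₆² / E₄³` matches the
remaining terms with the hypergeometric operator. -/
theorem IsThetaTower.hasDerivAt_pullbackDeriv₂ (hu : IsThetaTower u)
    (hq : q ∈ Set.Ioo 0 (rexp (-2 * π))) :
    HasDerivAt (pullbackDeriv₂ u)
      ((√(E4 q))⁻¹ * E6 q * hypergeometricOp (fun k ↦ u k (z1 q)) (z1 q) / q) q := by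
  have hq1 := Ioo_exp_subset hq
  have hρ := hasDerivAt_logDerivZ1 hq1
  have hP := hasDerivAt_E2 hq1
  have hQ := hasDerivAt_E4 hq1
  have hE4 := (E4_pos hq.1.le).ne'
  have h₂ := (hu.hasDerivAt_comp_z1 2 hq).fun_mul (hρ.fun_pow 2)
  have h₁ := (hu.hasDerivAt_comp_z1 1 hq).fun_mul ((((hρ.fun_pow 2).const_mul (2 / 3)).fun_sub
    ((hP.fun_mul hρ).div_const 6)).fun_sub (hQ.div_const 2))
  have h₀ := (hu.hasDerivAt_comp_z1 0 hq).fun_mul (((((hP.fun_pow 2).div_const 72).fun_sub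
    ((hP.fun_mul hρ).div_const 36)).fun_add ((hρ.fun_pow 2).div_const 12)).fun_sub
    (hQ.const_mul (5 / 72)))
  refine ((hasDerivAt_inv_sqrt_E4 hq1).mul ((h₂.fun_add h₁).fun_add h₀)).congr_deriv ?_
  simp only [hypergeometricOp]
  rw [z1_eq_one_sub_logDerivZ1 hq1, E6_eq_logDerivZ1_mul hq1.1.le]
  field_simp
  ring

theorem tendsto_logDerivZ1_zero : Tendsto logDerivZ1 (𝓝[>] 0) (𝓝 1) := by
  simpa only [div_one] using! tendsto_E6_zero.div tendsto_E4_zero one_ne_zero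

theorem tendsto_inv_sqrt_E4_zero : Tendsto (fun q ↦ (√(E4 q))⁻¹) (𝓝[>] 0) (𝓝 1) := by
  simpa using tendsto_E4_zero.sqrt.inv₀ (by simp)

theorem tendsto_z1_zero : Tendsto z1 (𝓝[>] 0) (𝓝 0) := by
  have hlim := ((tendsto_logDerivZ1_zero.pow 2).div tendsto_E4_zero one_ne_zero).const_sub 1
  rw [one_pow, div_one, sub_self] at hlim
  refine hlim.congr' ?_
  filter_upwards [Ioo_mem_nhdsGT one_pos] with q hq using (z1_eq_one_sub_logDerivZ1 hq).symm

theorem tendsto_thetaF1_zero_comp_z1 (k : ℕ) :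
    Tendsto (fun q ↦ thetaF1 0 k (z1 q)) (𝓝[>] 0) (𝓝 (0 ^ k)) :=
  (tendsto_thetaF1_zero k).comp tendsto_z1_zero

theorem tendsto_pullback_thetaF1_zero : Tendsto (pullback (thetaF1 0)) (𝓝[>] 0) (𝓝 1) := by
  simpa using! tendsto_inv_sqrt_E4_zero.mul (tendsto_thetaF1_zero_comp_z1 0)

theorem tendsto_pullbackDeriv_thetaF1_zero :
    Tendsto (pullbackDeriv (thetaF1 0)) (𝓝[>] 0) (𝓝 0) := by
  have hlim := tendsto_inv_sqrt_E4_zero.mul (((tendsto_thetaF1_zero_comp_z1 1).mul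
    tendsto_logDerivZ1_zero).sub ((tendsto_thetaF1_zero_comp_z1 0).mul
    ((tendsto_E2_zero.sub tendsto_logDerivZ1_zero).div_const 6)))
  convert! hlim using 2
  norm_num

theorem tendsto_pullbackDeriv₂_thetaF1_zero :
    Tendsto (pullbackDeriv₂ (thetaF1 0)) (𝓝[>] 0) (𝓝 0) := by
  have hP := tendsto_E2_zero
  have hQ := tendsto_E4_zero
  have hρ := tendsto_logDerivZ1_zero
  have h₂ := (tendsto_thetaF1_zero_comp_z1 2).mul (hρ.pow 2)
  have h₁ := (tendsto_thetaF1_zero_comp_z1 1).mul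
    ((((hρ.pow 2).const_mul (2 / 3)).sub ((hP.mul hρ).div_const 6)).sub (hQ.div_const 2))
  have h₀ := (tendsto_thetaF1_zero_comp_z1 0).mul
    (((((hP.pow 2).div_const 72).sub ((hP.mul hρ).div_const 36)).add
      ((hρ.pow 2).div_const 12)).sub (hQ.const_mul (5 / 72)))
  have hlim := tendsto_inv_sqrt_E4_zero.mul ((h₂.add h₁).add h₀)
  convert! hlim using 2
  norm_num

theorem pullback_thetaF1_zero : Set.EqOn (pullback (thetaF1 0)) (fun _ ↦ 1)
    (Set.Ioo 0 (rexp (-2 * π))) := by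
  have hu := isThetaTower_thetaF1 le_rfl
  have h₂ : Set.EqOn (pullbackDeriv₂ (thetaF1 0)) (fun _ ↦ 0) (Set.Ioo 0 (rexp (-2 * π))) := by
    refine eqOn_const_of_hasDerivAt_zero (exp_pos _) (fun q hq ↦ ?_)
      tendsto_pullbackDeriv₂_thetaF1_zero
    simpa [hypergeometricOp_thetaF1 le_rfl (z1_mem_Ioo hq)] using hu.hasDerivAt_pullbackDeriv₂ hq
  have h₁ : Set.EqOn (pullbackDeriv (thetaF1 0)) (fun _ ↦ 0) (Set.Ioo 0 (rexp (-2 * π))) :=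
    eqOn_const_of_hasDerivAt_zero (exp_pos _)
      (fun q hq ↦ by simpa [h₂ hq] using hu.hasDerivAt_pullbackDeriv hq)
      tendsto_pullbackDeriv_thetaF1_zero
  exact eqOn_const_of_hasDerivAt_zero (exp_pos _)
    (fun q hq ↦ by simpa [h₁ hq] using hu.hasDerivAt_pullback hq) tendsto_pullback_thetaF1_zero

theorem F1_zero_z1 (hq : q ∈ Set.Ioo 0 (rexp (-2 * π))) : F1 0 (z1 q) = √(E4 q) := by
  have hone := pullback_thetaF1_zero hq
  have hsqrt := (sqrt_pos.2 (E4_pos hq.1.le)).ne'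
  rwa [pullback, thetaF1_zero (z1_mem_Ioo hq).1, inv_mul_eq_iff_eq_mul₀ hsqrt, mul_one] at hone

theorem eqOn_qDeriv {s : Set ℝ} (hs : IsOpen s) (hs0 : 0 ∉ s) {f g g' : ℝ → ℝ}
    (hfg : Set.EqOn f g s) (hg : ∀ t ∈ s, HasDerivAt g (g' t / t) t) :
    Set.EqOn (qDeriv f) g' s := fun t ht ↦ by
  have ht0 : t ≠ 0 := fun h ↦ hs0 (h ▸ ht)
  rw [qDeriv, (hfg.eventuallyEq_of_mem (hs.mem_nhds ht)).deriv_eq, (hg t ht).deriv,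
    mul_div_cancel₀ _ ht0]

theorem qDeriv_qDeriv_qDeriv_F1_div {x : ℝ} (hx : 0 ≤ x)
    (hq : q ∈ Set.Ioo 0 (rexp (-2 * π))) :
    qDeriv (qDeriv (qDeriv fun t ↦ F1 x (z1 t) / F1 0 (z1 t))) q =
      x ^ 3 * z1 q ^ x * E6 q / √(E4 q) := by
  have hu := isThetaTower_thetaF1 hx
  have h0 : (0 : ℝ) ∉ Set.Ioo 0 (rexp (-2 * π)) := fun h ↦ h.1.false
  have hφ : Set.EqOn (fun t ↦ F1 x (z1 t) / F1 0 (z1 t)) (pullback (thetaF1 x))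
      (Set.Ioo 0 (rexp (-2 * π))) := fun t ht ↦ by
    simp only [pullback]
    rw [F1_zero_z1 ht, thetaF1_zero (z1_mem_Ioo ht).1, div_eq_inv_mul]
  have h₁ := eqOn_qDeriv isOpen_Ioo h0 hφ fun t ↦ hu.hasDerivAt_pullback
  have h₂ := eqOn_qDeriv isOpen_Ioo h0 h₁ fun t ↦ hu.hasDerivAt_pullbackDeriv
  have h₃ := eqOn_qDeriv isOpen_Ioo h0 h₂ fun t ↦ hu.hasDerivAt_pullbackDeriv₂
  refine (h₃ hq).trans ?_
  simp only [hypergeometricOp_thetaF1 hx (z1_mem_Ioo hq)]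
  ring

end Pullback

theorem sqrt_z1 {q : ℝ} (hq : 0 ≤ q) : √(z1 q) = 24 * √3 * etaQ q ^ 12 / √(E4 q) ^ 3 := by
  have hsq : z1 q = (24 * √3 * etaQ q ^ 12 / √(E4 q) ^ 3) ^ 2 := by
    have h3 : √3 ^ 2 = (3 : ℝ) := sq_sqrt (by norm_num)
    have hE4 : (√(E4 q) ^ 3) ^ 2 = E4 q ^ 3 := by
      rw [pow_right_comm, sq_sqrt (E4_pos hq).le]
    rw [z1, div_pow, mul_pow, mul_pow, h3, hE4]
    ring
  rw [hsq, sqrt_sq (by positivity)]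

theorem stmt_13 :
    ∀ q ∈ Set.Ioo (0 : ℝ) (Real.exp (-2 * π)),
      (0 < z1 q ∧ z1 q < 1) ∧
      qDeriv (qDeriv (qDeriv (fun t => F1 (1 / 2) (z1 t) / F1 0 (z1 t)))) q =
        3 * Real.sqrt 3 * etaQ q ^ 12 * E6 q / E4 q ^ 2 := by
  intro q hq
  refine ⟨z1_mem_Ioo hq, ?_⟩
  have hE4 := E4_pos hq.1.le
  have hpow : √(E4 q) ^ 4 = E4 q ^ 2 := by rw [pow_mul _ 2 2, sq_sqrt hE4.le]
  rw [qDeriv_qDeriv_qDeriv_F1_div (by norm_num) hq, ← sqrt_eq_rpow, sqrt_z1 hq.1.le, ← hpow]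
  field_simp
  ring
end

section
/- For every real q ∈ (0, e^{−π}) one has 0 < z₄(q) < 1 and ∑_{n=0}^∞ ((1/2)_n)³/(n!)³ · z₄(q)ⁿ = θ₃(q)⁴. -/
open Real

/-- Jacobi theta null value `θ₂(q) = ∑_{n∈ℤ} q^{(n+1/2)²}`. -/
noncomputable def theta2 (q : ℝ) : ℝ := ∑' n : ℤ, q ^ (((n : ℝ) + 1 / 2) ^ 2)

/-- Jacobi theta null value `θ₃(q) = ∑_{n∈ℤ} q^{n²}`. -/
noncomputable def theta3 (q : ℝ) : ℝ := ∑' n : ℤ, q ^ ((n : ℝ) ^ 2)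

/-- Jacobi theta null value `θ₄(q) = ∑_{n∈ℤ} (−1)ⁿ q^{n²}`. -/
noncomputable def theta4 (q : ℝ) : ℝ := ∑' n : ℤ, (-1 : ℝ) ^ n * q ^ ((n : ℝ) ^ 2)

/-- The modular lambda function `λ(q) = θ₂(q)⁴/θ₃(q)⁴`. -/
noncomputable def modLambda (q : ℝ) : ℝ := theta2 q ^ 4 / theta3 q ^ 4

/-- `z₄(q) = 4λ(q)(1−λ(q))`. -/
noncomputable def z4 (q : ℝ) : ℝ := 4 * modLambda q * (1 - modLambda q)

/-- `F₄(x,z) = ∑_{n=0}^∞ z^{n+x} · ((1/2+x)_n)³/((1+x)_n)³`. -/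
noncomputable def F4 (x z : ℝ) : ℝ :=
  ∑' n : ℕ, z ^ ((n : ℝ) + x) *
    ((ascPochhammer ℝ n).eval (1 / 2 + x)) ^ 3 / ((ascPochhammer ℝ n).eval (1 + x)) ^ 3

/-!
Write `K = ₂F₁(1/2, 1/2; 1; ·)`. The duplication formulas express `θ₃(q)²` and `θ₂(q)²` through the
theta values at `q²`, and they match Landen's transformation of `K` exactly, so that
`K(λ(q)) / θ₃(q)²` is invariant under `q ↦ q²`. Iterating, `q` tends to `0`, where the quotient is
`1`; this is Jacobi's inversion formula `K(λ(q)) = θ₃(q)²`.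

For `q = exp(-πt)`, Poisson summation gives `λ(exp(-π/t)) = 1 - λ(q)`, hence
`K(1 - λ(q)) = t K(λ(q))`. As `K` is increasing, `λ(q) < 1/2` for `t > 1`. This is the range in
which Kummer's quadratic transformation reads `K(λ) = ₂F₁(1/4, 1/4; 1; 4λ(1 - λ))`, and Clausen's
formula identifies the square of the right-hand side with the `₃F₂` series in `z₄(q)`.

Landen's and Kummer's transformations hold near `0` because both sides are analytic solutions of
one linear equation with a regular singular point at `0` and no positive integer exponent; they
extend by the identity principle. Clausen's formula is an identity of formal power series,
read off from the third-order equation satisfied by the square of a solution.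
-/

open Filter
open scoped Nat Topology ENNReal

section HypergeometricCoefficient

variable {K : Type*} [Field K] [CharZero K] {a b c : K}

theorem ordinaryHypergeometricCoefficient_succ {n : ℕ} (hc : c + n ≠ 0) :
    (n + 1) * (c + n) * ordinaryHypergeometricCoefficient a b c (n + 1) =
      (a + n) * (b + n) * ordinaryHypergeometricCoefficient a b c n := by
  have hn : (n : K) + 1 ≠ 0 := n.cast_add_one_ne_zero
  simp only [ordinaryHypergeometricCoefficient, ascPochhammer_succ_eval, Nat.factorial_succ]
  push_cast
  field_simp

end HypergeometricCoefficient

section PowerSeriesDerivative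

open FormalMultilinearSeries

variable {𝕜 : Type*} [NontriviallyNormedField 𝕜] [CompleteSpace 𝕜] {f : 𝕜 → 𝕜}
  {p : FormalMultilinearSeries 𝕜 𝕜 𝕜} {r : ℝ≥0∞} {z : 𝕜}

theorem exists_hasFPowerSeriesOnBall_deriv (hf : HasFPowerSeriesOnBall f p z r) :
    ∃ p' : FormalMultilinearSeries 𝕜 𝕜 𝕜, HasFPowerSeriesOnBall (deriv f) p' z r ∧
      ∀ n, p'.coeff n = (n + 1) * p.coeff (n + 1) :=
  ⟨_, (ContinuousLinearMap.apply 𝕜 𝕜 (1 : 𝕜)).comp_hasFPowerSeriesOnBall hf.fderiv,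
    fun n ↦ (derivSeries_coeff_one p n).trans (by simp)⟩

theorem hasSum_mul_deriv (hf : HasFPowerSeriesOnBall f p 0 r) (hz : z ∈ Metric.eball 0 r) :
    HasSum (fun n : ℕ ↦ n * p.coeff n * z ^ n) (z * deriv f z) := by
  obtain ⟨p', hp', hcoeff⟩ := exists_hasFPowerSeriesOnBall_deriv hf
  rw [← hasSum_nat_add_iff' 1]
  simpa [hcoeff, pow_succ, mul_assoc, mul_left_comm, mul_comm] using (hp'.hasSum hz).mul_left z

end PowerSeriesDerivative

section HypergeometricFunction

open FormalMultilinearSeries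

variable {𝕜 : Type*} [RCLike 𝕜]

theorem one_le_radius_ordinaryHypergeometricSeries (a b c : 𝕜) :
    1 ≤ (ordinaryHypergeometricSeries 𝕜 a b c).radius := by
  by_cases! h : ∀ k : ℕ, (k : 𝕜) ≠ -a ∧ (k : 𝕜) ≠ -b ∧ (k : 𝕜) ≠ -c
  · exact (ordinaryHypergeometricSeries_radius_eq_one 𝕜 a b c h).ge
  obtain ⟨k, hk⟩ := h
  obtain rfl | rfl | rfl : a = -(k : 𝕜) ∨ b = -(k : 𝕜) ∨ c = -(k : 𝕜) := by
    contrapose! hk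
    exact ⟨fun h ↦ hk.1 (by simp [h]), fun h ↦ hk.2.1 (by simp [h]), fun h ↦ hk.2.2 (by simp [h])⟩
  · simp [ordinaryHypergeometric_radius_top_of_neg_nat₁]
  · simp [ordinaryHypergeometric_radius_top_of_neg_nat₂]
  · simp [ordinaryHypergeometric_radius_top_of_neg_nat₃]

theorem hasFPowerSeriesOnBall_ordinaryHypergeometric (a b c : 𝕜) :
    HasFPowerSeriesOnBall (₂F₁ a b c) (ordinaryHypergeometricSeries 𝕜 a b c) 0 1 :=
  have h := one_le_radius_ordinaryHypergeometricSeries a b c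
  ((ordinaryHypergeometricSeries 𝕜 a b c).hasFPowerSeriesOnBall
    (zero_lt_one.trans_le h)).mono zero_lt_one h

theorem coeff_ordinaryHypergeometricSeries (a b c : 𝕜) (n : ℕ) :
    (ordinaryHypergeometricSeries 𝕜 a b c).coeff n = ordinaryHypergeometricCoefficient a b c n :=
  coeff_ofScalars

variable {z : 𝕜}

theorem mem_eball_zero_one_iff : z ∈ Metric.eball (0 : 𝕜) 1 ↔ ‖z‖ < 1 := by
  rw [← ENNReal.coe_one, Metric.eball_coe, NNReal.coe_one, mem_ball_zero_iff]

theorem analyticAt_ordinaryHypergeometric (a b c : 𝕜) (hz : ‖z‖ < 1) :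
    AnalyticAt 𝕜 (₂F₁ a b c) z :=
  (hasFPowerSeriesOnBall_ordinaryHypergeometric a b c).analyticAt_of_mem
    (mem_eball_zero_one_iff.2 hz)

theorem hasSum_ordinaryHypergeometric (a b c : 𝕜) (hz : ‖z‖ < 1) :
    HasSum (fun n ↦ ordinaryHypergeometricCoefficient a b c n * z ^ n) (₂F₁ a b c z) := by
  simpa [coeff_ordinaryHypergeometricSeries, mul_comm] using
    (hasFPowerSeriesOnBall_ordinaryHypergeometric a b c).hasSum (mem_eball_zero_one_iff.2 hz)

theorem summable_norm_ordinaryHypergeometric (a b c : 𝕜) (hz : ‖z‖ < 1) :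
    Summable fun n ↦ ‖ordinaryHypergeometricCoefficient a b c n * z ^ n‖ := by
  have h := (ordinaryHypergeometricSeries 𝕜 a b c).summable_norm_apply
    (Metric.eball_subset_eball (one_le_radius_ordinaryHypergeometricSeries a b c)
      (mem_eball_zero_one_iff.2 hz))
  simpa only [apply_eq_pow_smul_coeff, coeff_ordinaryHypergeometricSeries, smul_eq_mul, mul_comm]
    using h

theorem ordinaryHypergeometric_differential_equation {a b c : 𝕜} (hc : ∀ n : ℕ, c ≠ -n)
    (hz : ‖z‖ < 1) :
    z * (1 - z) * deriv (deriv (₂F₁ a b c)) z + (c - (a + b + 1) * z) * deriv (₂F₁ a b c) z =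
      a * b * ₂F₁ a b c z := by
  set A := ordinaryHypergeometricCoefficient a b c
  set F : 𝕜 → 𝕜 := ₂F₁ a b c
  have hball := mem_eball_zero_one_iff.2 hz
  have hp := hasFPowerSeriesOnBall_ordinaryHypergeometric a b c
  obtain ⟨p', hp', hcoeff⟩ := exists_hasFPowerSeriesOnBall_deriv hp
  simp only [coeff_ordinaryHypergeometricSeries] at hcoeff
  have hF : HasSum (fun n : ℕ ↦ A n * z ^ n) (F z) := hasSum_ordinaryHypergeometric a b c hz
  have hF' : HasSum (fun n : ℕ ↦ (n + 1) * A (n + 1) * z ^ n) (deriv F z) := by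
    simpa [hcoeff, mul_comm] using hp'.hasSum hball
  have hzF' : HasSum (fun n : ℕ ↦ n * A n * z ^ n) (z * deriv F z) := by
    simpa only [coeff_ordinaryHypergeometricSeries] using hasSum_mul_deriv hp hball
  have hzF'' : HasSum (fun n : ℕ ↦ n * ((n + 1) * A (n + 1)) * z ^ n) (z * deriv (deriv F) z) := by
    simpa only [hcoeff] using hasSum_mul_deriv hp' hball
  have hz2F'' : HasSum (fun n : ℕ ↦ n * (n - 1) * A n * z ^ n) (z * (z * deriv (deriv F) z)) := by
    rw [← hasSum_nat_add_iff' 1]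
    convert! hzF''.mul_left z using 1
    · ext n
      push_cast
      ring
    · simp
  have hsum := ((hzF''.sub hz2F'').add (hF'.mul_left c)).sub (hzF'.mul_left (a + b + 1))
  have hrec (n : ℕ) : (n + 1) * (c + n) * A (n + 1) = (a + n) * (b + n) * A n :=
    ordinaryHypergeometricCoefficient_succ fun h ↦ hc n (eq_neg_of_add_eq_zero_left h)
  have hterm (n : ℕ) : n * ((n + 1) * A (n + 1)) * z ^ n - n * (n - 1) * A n * z ^ n +
      c * ((n + 1) * A (n + 1) * z ^ n) - (a + b + 1) * (n * A n * z ^ n) =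
      a * b * (A n * z ^ n) := by
    linear_combination z ^ n * hrec n
  simp only [hterm] at hsum
  linear_combination hsum.unique (hF.mul_left (a * b))

end HypergeometricFunction

theorem monotoneOn_ordinaryHypergeometric {a b c : ℝ} (ha : 0 < a) (hb : 0 < b) (hc : 0 < c) :
    MonotoneOn (₂F₁ a b c : ℝ → ℝ) (Set.Ico 0 1) := by
  have hs {x : ℝ} (hx : x ∈ Set.Ico (0 : ℝ) 1) := hasSum_ordinaryHypergeometric a b c
    (z := x) (by rw [norm_of_nonneg hx.1]; exact hx.2)
  have hcoeff (n : ℕ) : 0 ≤ ordinaryHypergeometricCoefficient a b c n := by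
    have := ascPochhammer_pos n a ha
    have := ascPochhammer_pos n b hb
    have := ascPochhammer_pos n c hc
    positivity
  intro x hx y hy hxy
  refine hasSum_le (fun n ↦ ?_) (hs hx) (hs hy)
  exact mul_le_mul_of_nonneg_left (pow_le_pow_left₀ hx.1 hxy n) (hcoeff n)

section FrobeniusUniqueness

variable {𝕜 : Type*} [NontriviallyNormedField 𝕜] [CompleteSpace 𝕜]

/-- `y` solves `x A(x) y'' + B(x) y' + C(x) y = 0` at all `x ≠ 0` near `0`, a linear equation with
a regular singular point at the origin. -/
def IsRegularSingularSolution (A B C y : 𝕜 → 𝕜) : Prop :=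
  ∀ᶠ x in 𝓝[≠] 0, x * A x * deriv (deriv y) x + B x * deriv y x + C x * y x = 0

variable {A B C f g : 𝕜 → 𝕜}

theorem IsRegularSingularSolution.sub (hf : AnalyticAt 𝕜 f 0) (hg : AnalyticAt 𝕜 g 0)
    (hfsol : IsRegularSingularSolution A B C f) (hgsol : IsRegularSingularSolution A B C g) :
    IsRegularSingularSolution A B C (f - g) := by
  have hderiv {u v : 𝕜 → 𝕜} (hu : AnalyticAt 𝕜 u 0) (hv : AnalyticAt 𝕜 v 0) :
      deriv (u - v) =ᶠ[𝓝 0] deriv u - deriv v := by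
    filter_upwards [hu.eventually_analyticAt, hv.eventually_analyticAt] with x hux hvx
    exact deriv_sub hux.differentiableAt hvx.differentiableAt
  have hderiv₁ := hderiv hf hg
  have hderiv₂ := hderiv₁.deriv.trans (hderiv hf.deriv hg.deriv)
  filter_upwards [hfsol, hgsol, hderiv₁.filter_mono nhdsWithin_le_nhds,
    hderiv₂.filter_mono nhdsWithin_le_nhds] with x hfx hgx h₁ h₂
  rw [h₁, h₂]
  simp only [Pi.sub_apply]
  linear_combination hfx - hgx

theorem eventually_mul_deriv_eq_pow_mul {n : ℕ} (hg : AnalyticAt 𝕜 g 0)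
    (hfg : f =ᶠ[𝓝 0] fun x ↦ x ^ n * g x) :
    (fun x ↦ x * deriv f x) =ᶠ[𝓝 0] fun x ↦ x ^ n * (n * g x + x * deriv g x) := by
  filter_upwards [hfg.deriv, hg.eventually_analyticAt] with x hx hgx
  rw [hx, deriv_fun_mul (by fun_prop) hgx.differentiableAt, deriv_pow_field]
  rcases n with - | n
  · simp
  · simp only [Nat.add_sub_cancel]
    ring

/- If `f = x ^ n * g` with `g 0 ≠ 0`, then multiplying the equation by `x` and dividing by `x ^ n`
leaves, in the limit `x → 0`, the indicial equation `n * ((n - 1) * A 0 + B 0) * g 0 = 0`. -/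
theorem IsRegularSingularSolution.eventuallyEq_zero [CharZero 𝕜] (hA : ContinuousAt A 0)
    (hB : ContinuousAt B 0) (hC : ContinuousAt C 0) (hindicial : ∀ n : ℕ, n * A 0 + B 0 ≠ 0)
    (hf : AnalyticAt 𝕜 f 0) (hf0 : f 0 = 0) (hsol : IsRegularSingularSolution A B C f) :
    f =ᶠ[𝓝 0] 0 := by
  by_contra hne
  obtain ⟨n, g, hg, hg0, hfg⟩ := hf.exists_eventuallyEq_pow_smul_nonzero_iff.2 hne
  simp only [sub_zero, smul_eq_mul] at hfg
  set g₁ : 𝕜 → 𝕜 := fun x ↦ n * g x + x * deriv g x with hg₁_def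
  set g₂ : 𝕜 → 𝕜 := fun x ↦ n * g₁ x + x * deriv g₁ x with hg₂_def
  have hg₁ : AnalyticAt 𝕜 g₁ 0 := by fun_prop
  have hg₂ : AnalyticAt 𝕜 g₂ 0 := by fun_prop
  have hf₁ := eventually_mul_deriv_eq_pow_mul hg hfg
  have hf₂ := eventually_mul_deriv_eq_pow_mul hg₁ hf₁
  have hzero : ∀ᶠ x in 𝓝[≠] 0, A x * (g₂ x - g₁ x) + B x * g₁ x + x * C x * g x = 0 := by
    filter_upwards [hsol, hfg.filter_mono nhdsWithin_le_nhds, hf₁.filter_mono nhdsWithin_le_nhds,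
      hf₂.filter_mono nhdsWithin_le_nhds, hf.deriv.eventually_analyticAt.filter_mono
      nhdsWithin_le_nhds, self_mem_nhdsWithin] with x hx h₀ h₁ h₂ hf'x hx0
    rw [deriv_fun_mul differentiableAt_fun_id hf'x.differentiableAt, deriv_id''] at h₂
    refine (mul_eq_zero.1 ?_).resolve_left (pow_ne_zero n hx0)
    linear_combination x * hx - A x * (h₂ - h₁) - B x * h₁ - x * C x * h₀
  have hcont : ContinuousAt (fun x ↦ A x * (g₂ x - g₁ x) + B x * g₁ x + x * C x * g x) 0 := by
    have := hg.continuousAt; have := hg₁.continuousAt; have := hg₂.continuousAt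
    fun_prop
  have hlimit := tendsto_nhds_unique (hcont.tendsto.mono_left nhdsWithin_le_nhds)
    (tendsto_const_nhds.congr' (hzero.mono fun x hx ↦ hx.symm))
  obtain - | m := n
  · exact hg0 (by simpa [hf0] using hfg.self_of_nhds.symm)
  · have hindex : ((m : 𝕜) + 1) * (m * A 0 + B 0) * g 0 = 0 := by
      simp only [hg₁_def, hg₂_def] at hlimit
      push_cast at hlimit
      linear_combination hlimit
    simp [hindicial, hg0, Nat.cast_add_one_ne_zero] at hindex

theorem IsRegularSingularSolution.eventuallyEq [CharZero 𝕜] (hA : ContinuousAt A 0)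
    (hB : ContinuousAt B 0) (hC : ContinuousAt C 0) (hindicial : ∀ n : ℕ, n * A 0 + B 0 ≠ 0)
    (hf : AnalyticAt 𝕜 f 0) (hg : AnalyticAt 𝕜 g 0) (hfg : f 0 = g 0)
    (hfsol : IsRegularSingularSolution A B C f) (hgsol : IsRegularSingularSolution A B C g) :
    f =ᶠ[𝓝 0] g :=
  eventuallyEq_iff_sub.2 <| (hfsol.sub hf hg hgsol).eventuallyEq_zero hA hB hC hindicial
    (hf.sub hg) (sub_eq_zero.2 hfg)

end FrobeniusUniqueness

theorem isRegularSingularSolution_of_hasDerivAt {𝕜 : Type*} [NontriviallyNormedField 𝕜]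
    {A B C y y' y'' : 𝕜 → 𝕜} (hy : ∀ᶠ x in 𝓝 0, HasDerivAt y (y' x) x)
    (hy' : ∀ᶠ x in 𝓝 0, HasDerivAt y' (y'' x) x)
    (hode : ∀ᶠ x in 𝓝 0, x * A x * y'' x + B x * y' x + C x * y x = 0) :
    IsRegularSingularSolution A B C y := by
  have hderiv : deriv y =ᶠ[𝓝 0] y' := hy.mono fun x hx ↦ hx.deriv
  refine Eventually.filter_mono nhdsWithin_le_nhds ?_
  filter_upwards [hode, hderiv, hderiv.deriv, hy'] with x hx h₁ h₂ h₃
  rw [h₂, h₃.deriv, h₁, hx]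

section QuadraticTransformations

variable {a b c : ℝ}

theorem eventually_hasDerivAt_ordinaryHypergeometric_comp {w : ℝ → ℝ} (hw : ContinuousAt w 0)
    (hw0 : w 0 = 0) : ∀ᶠ x in 𝓝 0, ‖w x‖ < 1 ∧
      HasDerivAt (₂F₁ a b c) (deriv (₂F₁ a b c) (w x)) (w x) ∧
      HasDerivAt (deriv (₂F₁ a b c)) (deriv (deriv (₂F₁ a b c)) (w x)) (w x) := by
  have hnorm : ∀ᶠ x in 𝓝 0, ‖w x‖ < 1 := hw.norm.eventually_lt_const (by simp [hw0])
  filter_upwards [hnorm] with x hx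
  have hF := analyticAt_ordinaryHypergeometric a b c hx
  exact ⟨hx, hF.differentiableAt.hasDerivAt, hF.deriv.differentiableAt.hasDerivAt⟩

theorem isRegularSingularSolution_ordinaryHypergeometric (hc : ∀ n : ℕ, c ≠ -n) :
    IsRegularSingularSolution (fun x ↦ 1 - x) (fun x ↦ c - (a + b + 1) * x) (fun _ ↦ -(a * b))
      (₂F₁ a b c : ℝ → ℝ) := by
  have h := eventually_hasDerivAt_ordinaryHypergeometric_comp (a := a) (b := b) (c := c)
    (w := fun x ↦ x) continuousAt_id rfl
  refine isRegularSingularSolution_of_hasDerivAt (h.mono fun x hx ↦ hx.2.1)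
    (h.mono fun x hx ↦ hx.2.2) (h.mono fun x hx ↦ ?_)
  linear_combination ordinaryHypergeometric_differential_equation (a := a) (b := b) hc hx.1

theorem isRegularSingularSolution_kummer (hc : ∀ n : ℕ, a + b + 1 / 2 ≠ -n) :
    IsRegularSingularSolution (fun x ↦ 1 - x)
      (fun x ↦ a + b + 1 / 2 - (2 * a + 2 * b + 1) * x) (fun _ ↦ -(2 * a * (2 * b)))
      (fun x : ℝ ↦ ₂F₁ a b (a + b + 1 / 2) (4 * x * (1 - x))) := by
  set F : ℝ → ℝ := ₂F₁ a b (a + b + 1 / 2)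
  have hF : ∀ᶠ x : ℝ in 𝓝 0, _ := eventually_hasDerivAt_ordinaryHypergeometric_comp
    (a := a) (b := b) (c := a + b + 1 / 2) (w := fun x ↦ 4 * x * (1 - x)) (by fun_prop) (by simp)
  have hw (x : ℝ) : HasDerivAt (fun x ↦ 4 * x * (1 - x)) (4 - 8 * x) x :=
    (((hasDerivAt_id' x).const_mul 4).mul ((hasDerivAt_id' x).const_sub 1)).congr_deriv (by ring)
  have hw' (x : ℝ) : HasDerivAt (fun x : ℝ ↦ 4 - 8 * x) (-8) x := by
    simpa using ((hasDerivAt_id' x).const_mul 8).const_sub 4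
  refine isRegularSingularSolution_of_hasDerivAt
    (hF.mono fun x hx ↦ hx.2.1.comp x (hw x))
    (hF.mono fun x hx ↦ (hx.2.2.comp x (hw x)).mul (hw' x)) (hF.mono fun x hx ↦ ?_)
  simp only [Function.comp_apply]
  linear_combination 4 * ordinaryHypergeometric_differential_equation (a := a) (b := b) hc hx.1

theorem ordinaryHypergeometric_kummer (hc : ∀ n : ℕ, a + b + 1 / 2 ≠ -n) {x : ℝ} (hx0 : 0 ≤ x)
    (hx : x < 1 / 2) :
    ₂F₁ (2 * a) (2 * b) (a + b + 1 / 2) x = ₂F₁ a b (a + b + 1 / 2) (4 * x * (1 - x)) := by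
  have hleft : AnalyticOnNhd ℝ (₂F₁ (2 * a) (2 * b) (a + b + 1 / 2) : ℝ → ℝ) (Set.Ico 0 (1 / 2)) :=
    fun y hy ↦ analyticAt_ordinaryHypergeometric _ _ _ (by
      rw [norm_of_nonneg hy.1]; linarith [hy.2])
  have hright : AnalyticOnNhd ℝ (fun x : ℝ ↦ ₂F₁ a b (a + b + 1 / 2) (4 * x * (1 - x)))
      (Set.Ico 0 (1 / 2)) := fun y ⟨hy0, hy⟩ ↦ by
    refine (analyticAt_ordinaryHypergeometric a b _ ?_).comp_of_eq (x := y)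
      (f := fun x : ℝ ↦ 4 * x * (1 - x)) (by fun_prop) rfl
    rw [norm_of_nonneg (by nlinarith)]
    nlinarith
  have hzero : (0 : ℝ) ∈ Set.Ico 0 (1 / 2) := by norm_num
  refine hleft.eqOn_of_preconnected_of_eventuallyEq hright isPreconnected_Ico hzero ?_ ⟨hx0, hx⟩
  refine IsRegularSingularSolution.eventuallyEq (by fun_prop) (by fun_prop) (by fun_prop)
    (fun n hn ↦ hc n ?_) (hleft 0 hzero) (hright 0 hzero) (by simp)
    (isRegularSingularSolution_ordinaryHypergeometric hc) (isRegularSingularSolution_kummer hc)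
  linear_combination hn

theorem isRegularSingularSolution_ordinaryHypergeometric_sq (hc : ∀ n : ℕ, c ≠ -n) :
    IsRegularSingularSolution (fun x ↦ 1 - x ^ 2)
      (fun x ↦ 2 * c - 1 - (2 * a + 2 * b + 1) * x ^ 2) (fun x ↦ -(4 * a * b * x))
      (fun x : ℝ ↦ ₂F₁ a b c (x ^ 2)) := by
  set F : ℝ → ℝ := ₂F₁ a b c
  have hF : ∀ᶠ x : ℝ in 𝓝 0, _ := eventually_hasDerivAt_ordinaryHypergeometric_comp
    (a := a) (b := b) (c := c) (w := fun x ↦ x ^ 2) (by fun_prop) (by simp)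
  have hw (x : ℝ) : HasDerivAt (fun x ↦ x ^ 2) (2 * x) x := by simpa using hasDerivAt_pow 2 x
  have hw' (x : ℝ) : HasDerivAt (fun x ↦ 2 * x) 2 x := by
    simpa using (hasDerivAt_id' x).const_mul 2
  refine isRegularSingularSolution_of_hasDerivAt
    (hF.mono fun x hx ↦ hx.2.1.comp (h := fun x ↦ x ^ 2) x (hw x))
    (hF.mono fun x hx ↦ (hx.2.2.comp (h := fun x ↦ x ^ 2) x (hw x)).mul (hw' x))
    (hF.mono fun x hx ↦ ?_)
  simp only [Function.comp_apply]
  linear_combination 4 * x * ordinaryHypergeometric_differential_equation (a := a) (b := b) hc hx.1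

theorem hasDerivAt_four_mul_div_one_add_sq {x : ℝ} (hx : 1 + x ≠ 0) :
    HasDerivAt (fun x ↦ 4 * x / (1 + x) ^ 2) (4 * (1 - x) / (1 + x) ^ 3) x := by
  refine (((hasDerivAt_id' x).const_mul 4).div (((hasDerivAt_id' x).const_add 1).fun_pow 2)
    (pow_ne_zero 2 hx)).congr_deriv ?_
  field_simp
  ring

theorem hasDerivAt_four_mul_one_sub_div_one_add_pow_three {x : ℝ} (hx : 1 + x ≠ 0) :
    HasDerivAt (fun x ↦ 4 * (1 - x) / (1 + x) ^ 3) (8 * (x - 2) / (1 + x) ^ 4) x := by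
  refine ((((hasDerivAt_id' x).const_sub 1).const_mul 4).div
    (((hasDerivAt_id' x).const_add 1).fun_pow 3) (pow_ne_zero 3 hx)).congr_deriv ?_
  field_simp
  ring

theorem hasDerivAt_one_add_rpow (r : ℝ) {x : ℝ} (hx : 0 < 1 + x) :
    HasDerivAt (fun x ↦ (1 + x) ^ r) (r * (1 + x) ^ r / (1 + x)) x :=
  (((hasDerivAt_id' x).const_add 1).rpow_const (.inl hx.ne')).congr_deriv (by
    rw [rpow_sub_one hx.ne']
    ring)

theorem hasDerivAt_rpow_mul_comp_four_mul_div {F : ℝ → ℝ} {F' p x : ℝ} (hx : 0 < 1 + x)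
    (hF : HasDerivAt F F' (4 * x / (1 + x) ^ 2)) :
    HasDerivAt (fun x ↦ (1 + x) ^ p * F (4 * x / (1 + x) ^ 2))
      ((1 + x) ^ p * (p * F (4 * x / (1 + x) ^ 2) / (1 + x) + 4 * (1 - x) / (1 + x) ^ 3 * F')) x :=
  ((hasDerivAt_one_add_rpow p hx).fun_mul (hF.comp (h := fun x ↦ 4 * x / (1 + x) ^ 2) x
    (hasDerivAt_four_mul_div_one_add_sq hx.ne'))).congr_deriv (by
      simp only [Function.comp_apply]
      ring)

theorem isRegularSingularSolution_landen (hb : ∀ n : ℕ, 2 * b ≠ -n) :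
    IsRegularSingularSolution (fun x ↦ 1 - x ^ 2)
      (fun x ↦ 2 * b - (4 * a - 2 * b + 2) * x ^ 2) (fun x ↦ -(4 * a * (a - b + 1 / 2) * x))
      (fun x : ℝ ↦ (1 + x) ^ (-(2 * a)) * ₂F₁ a b (2 * b) (4 * x / (1 + x) ^ 2)) := by
  have hpos : ∀ᶠ x : ℝ in 𝓝 0, 0 < 1 + x :=
    (continuous_const_add (1 : ℝ)).continuousAt.eventually_const_lt (by norm_num)
  have hF : ∀ᶠ x : ℝ in 𝓝 0, _ := eventually_hasDerivAt_ordinaryHypergeometric_comp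
    (a := a) (b := b) (c := 2 * b) (w := fun x ↦ 4 * x / (1 + x) ^ 2)
    (by fun_prop (disch := norm_num)) (by simp)
  have hF' : ∀ᶠ x : ℝ in 𝓝 0, HasDerivAt
      (fun x : ℝ ↦ (1 + x) ^ (-(2 * a)) *
        (-(2 * a) * ₂F₁ a b (2 * b) (4 * x / (1 + x) ^ 2) / (1 + x) +
          4 * (1 - x) / (1 + x) ^ 3 * deriv (₂F₁ a b (2 * b)) (4 * x / (1 + x) ^ 2))) _ x :=
    (hpos.and hF).mono fun x ⟨hx, hFx⟩ ↦ by
      have hw := hasDerivAt_four_mul_div_one_add_sq hx.ne'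
      have hone : HasDerivAt (fun x : ℝ ↦ 1 + x) 1 x := (hasDerivAt_id' x).const_add 1
      have hFw := hFx.2.1.comp (h := fun x ↦ 4 * x / (1 + x) ^ 2) x hw
      have hF'w := hFx.2.2.comp (h := fun x ↦ 4 * x / (1 + x) ^ 2) x hw
      exact (hasDerivAt_one_add_rpow _ hx).fun_mul (((hFw.const_mul _).fun_div hone hx.ne').fun_add
        ((hasDerivAt_four_mul_one_sub_div_one_add_pow_three hx.ne').fun_mul hF'w))
  refine isRegularSingularSolution_of_hasDerivAt
    ((hpos.and hF).mono fun x ⟨hx, hFx⟩ ↦ hasDerivAt_rpow_mul_comp_four_mul_div hx hFx.2.1)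
    hF' ((hpos.and hF).mono fun x ⟨hx, hFx⟩ ↦ ?_)
  have hode := ordinaryHypergeometric_differential_equation (a := a) (b := b) hb hFx.1
  have hx0 := hx.ne'
  simp only [Function.comp_apply]
  generalize (1 + x) ^ (-(2 * a)) = P
  generalize deriv (deriv (₂F₁ a b (2 * b))) (4 * x / (1 + x) ^ 2) = F₂ at hode ⊢
  generalize deriv (₂F₁ a b (2 * b)) (4 * x / (1 + x) ^ 2) = F₁ at hode ⊢
  generalize ₂F₁ a b (2 * b) (4 * x / (1 + x) ^ 2) = F₀ at hode ⊢
  field_simp at hode ⊢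
  linear_combination 8 * (1 - x) * (1 + x) * P * hode

theorem ordinaryHypergeometric_landen (hb : ∀ n : ℕ, 2 * b ≠ -n) {x : ℝ} (hx0 : 0 ≤ x)
    (hx : x < 1) :
    ₂F₁ a b (2 * b) (4 * x / (1 + x) ^ 2) =
      (1 + x) ^ (2 * a) * ₂F₁ a (a - b + 1 / 2) (b + 1 / 2) (x ^ 2) := by
  have hleft : AnalyticOnNhd ℝ
      (fun x : ℝ ↦ (1 + x) ^ (-(2 * a)) * ₂F₁ a b (2 * b) (4 * x / (1 + x) ^ 2))
      (Set.Ico 0 1) := fun y ⟨hy0, hy⟩ ↦ by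
    have hpow : AnalyticAt ℝ (fun x : ℝ ↦ (1 + x) ^ (-(2 * a))) y :=
      one_add_rpow_hasFPowerSeriesOnBall_zero.analyticAt_of_mem
        (mem_eball_zero_one_iff.2 (by rwa [norm_of_nonneg hy0]))
    refine hpow.mul ((analyticAt_ordinaryHypergeometric a b _ ?_).comp_of_eq (x := y)
      (f := fun x : ℝ ↦ 4 * x / (1 + x) ^ 2) (by fun_prop (disch := positivity)) rfl)
    rw [norm_of_nonneg (by positivity), div_lt_one (by positivity)]
    nlinarith [sq_pos_of_pos (sub_pos.2 hy)]
  have hright : AnalyticOnNhd ℝ (fun x : ℝ ↦ ₂F₁ a (a - b + 1 / 2) (b + 1 / 2) (x ^ 2))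
      (Set.Ico 0 1) := fun y ⟨hy0, hy⟩ ↦
    (analyticAt_ordinaryHypergeometric _ _ _ (by
      rw [norm_of_nonneg (by positivity)]; nlinarith)).comp_of_eq (x := y)
      (f := fun x : ℝ ↦ x ^ 2) (by fun_prop) rfl
  have hzero : (0 : ℝ) ∈ Set.Ico 0 1 := by norm_num
  have hc (n : ℕ) : b + 1 / 2 ≠ -n := fun h ↦ hb (2 * n + 1) (by push_cast; linarith)
  have hsq : IsRegularSingularSolution (fun x ↦ 1 - x ^ 2)
      (fun x ↦ 2 * b - (4 * a - 2 * b + 2) * x ^ 2) (fun x ↦ -(4 * a * (a - b + 1 / 2) * x))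
      (fun x : ℝ ↦ ₂F₁ a (a - b + 1 / 2) (b + 1 / 2) (x ^ 2)) := by
    convert! isRegularSingularSolution_ordinaryHypergeometric_sq hc using 2
    ring
  have hgerm := IsRegularSingularSolution.eventuallyEq (by fun_prop) (by fun_prop) (by fun_prop)
    (fun n hn ↦ hb n (by linear_combination hn)) (hleft 0 hzero) (hright 0 hzero) (by simp)
    (isRegularSingularSolution_landen hb) hsq
  have heq := hleft.eqOn_of_preconnected_of_eventuallyEq hright isPreconnected_Ico hzero hgerm
    ⟨hx0, hx⟩
  have hx1 : 0 < 1 + x := by linarith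
  simp only [rpow_neg hx1.le] at heq
  exact (inv_mul_eq_iff_eq_mul₀ (rpow_pos_of_pos hx1 _).ne').1 heq

end QuadraticTransformations

section Clausen

open PowerSeries

variable {K : Type*} [Field K]

/-- The Euler operator `X d/dX` on formal power series, which multiplies the `n`-th coefficient
by `n`. -/
noncomputable def eulerDerivation (K : Type*) [Field K] : Derivation K K⟦X⟧ K⟦X⟧ :=
  (X : K⟦X⟧) • PowerSeries.derivative K

theorem coeff_eulerDerivation (f : K⟦X⟧) (n : ℕ) :
    coeff n (eulerDerivation K f) = n * coeff n f := by
  rcases n with - | n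
  · simp [eulerDerivation]
  · simp [eulerDerivation, coeff_succ_X_mul, coeff_derivative, mul_comm]

theorem eulerDerivation_X : eulerDerivation K X = X := by
  simp [eulerDerivation]

theorem constantCoeff_eulerDerivation (f : K⟦X⟧) : constantCoeff (eulerDerivation K f) = 0 := by
  simp [eulerDerivation]

theorem eulerDerivation_mul_self {u : K⟦X⟧} {p r s : K} (hrs : 2 * s = 2 * r + 1)
    (hu : letI θ := eulerDerivation K
      θ (θ u) + r • θ u = X * (θ (θ u) + s • θ u + p • u)) :
    letI θ := eulerDerivation K
    letI w := u * u
    θ (θ (θ w)) + (3 * r) • θ (θ w) + (2 * r ^ 2) • θ w =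
      X * (θ (θ (θ w)) + (3 * s) • θ (θ w) + (2 * s ^ 2 + 4 * p) • θ w + (4 * p * s) • w) := by
  set θ := eulerDerivation K
  have hX : θ X = X := eulerDerivation_X
  have hu' := congr(θ $hu)
  have hrs' := congr(C $hrs)
  simp only [map_add, Derivation.map_smul, Derivation.leibniz, smul_eq_mul,
    hX] at hu' ⊢
  simp only [smul_eq_C_mul, map_add, map_mul, map_pow, map_ofNat, map_one] at hu hu' hrs' ⊢
  linear_combination 2 * u * hu' + (6 * θ u + 4 * C r * u) * hu -
    2 * u * X * (θ (θ u) + C s * θ u + C p * u) * hrs'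

variable [CharZero K] {a b c : K}

theorem eulerDerivation_mk_ordinaryHypergeometricCoefficient (hc : ∀ n : ℕ, c ≠ -n) :
    letI θ := eulerDerivation K
    letI u := PowerSeries.mk (ordinaryHypergeometricCoefficient a b c)
    θ (θ u) + (c - 1) • θ u = X * (θ (θ u) + (a + b) • θ u + (a * b) • u) := by
  ext (- | n)
  · simp [constantCoeff_eulerDerivation]
  · have hrec := ordinaryHypergeometricCoefficient_succ (a := a) (b := b) (c := c) (n := n)
      fun h ↦ hc n (eq_neg_of_add_eq_zero_left h)
    simp only [map_add, map_smul, coeff_eulerDerivation, coeff_mk, coeff_succ_X_mul, smul_eq_mul]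
    push_cast
    linear_combination hrec

theorem coeff_succ_mk_ordinaryHypergeometricCoefficient_sq
    (hc : ∀ n : ℕ, a + b + 1 / 2 ≠ -n) (n : ℕ) :
    letI u := PowerSeries.mk (ordinaryHypergeometricCoefficient a b (a + b + 1 / 2))
    (n + 1) * (n + 2 * (a + b)) * (n + (a + b + 1 / 2)) * coeff (n + 1) (u * u) =
      (n + 2 * a) * (n + 2 * b) * (n + (a + b)) * coeff n (u * u) := by
  set u := PowerSeries.mk (ordinaryHypergeometricCoefficient a b (a + b + 1 / 2))
  have hu := eulerDerivation_mk_ordinaryHypergeometricCoefficient (a := a) (b := b) hc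
  have h := congr(coeff (n + 1) $(eulerDerivation_mul_self (by ring) hu))
  simp only [map_add, map_smul, coeff_eulerDerivation, coeff_succ_X_mul, smul_eq_mul] at h
  push_cast at h
  linear_combination h

theorem coeff_mk_ordinaryHypergeometricCoefficient_sq
    (hc : ∀ n : ℕ, a + b + 1 / 2 ≠ -n) (n : ℕ) :
    letI u := PowerSeries.mk (ordinaryHypergeometricCoefficient a b (a + b + 1 / 2))
    (ascPochhammer K n).eval (2 * (a + b)) * (ascPochhammer K n).eval (a + b + 1 / 2) * n ! *
        coeff n (u * u) =
      (ascPochhammer K n).eval (2 * a) * (ascPochhammer K n).eval (2 * b) *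
        (ascPochhammer K n).eval (a + b) := by
  induction n with
  | zero => simp [ordinaryHypergeometricCoefficient]
  | succ n ih =>
    have hrec := coeff_succ_mk_ordinaryHypergeometricCoefficient_sq hc n
    simp only [ascPochhammer_succ_eval, Nat.factorial_succ]
    push_cast
    linear_combination (ascPochhammer K n).eval (2 * (a + b)) *
      (ascPochhammer K n).eval (a + b + 1 / 2) * n ! * hrec +
      (n + 2 * a) * (n + 2 * b) * (n + (a + b)) * ih

end Clausen

theorem hasSum_ordinaryHypergeometric_sq {𝕜 : Type*} [RCLike 𝕜] {a b z : 𝕜}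
    (hab : ∀ n : ℕ, 2 * (a + b) ≠ -n) (hz : ‖z‖ < 1) :
    HasSum (fun n : ℕ ↦ ((ascPochhammer 𝕜 n).eval (2 * a) * (ascPochhammer 𝕜 n).eval (2 * b) *
        (ascPochhammer 𝕜 n).eval (a + b)) / ((ascPochhammer 𝕜 n).eval (2 * (a + b)) *
        (ascPochhammer 𝕜 n).eval (a + b + 1 / 2) * n !) * z ^ n)
      (₂F₁ a b (a + b + 1 / 2) z ^ 2) := by
  set A := ordinaryHypergeometricCoefficient a b (a + b + 1 / 2)
  have hc (n : ℕ) : a + b + 1 / 2 ≠ -n := fun h ↦ hab (2 * n + 1) (by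
    push_cast
    linear_combination 2 * h)
  have hne {x : 𝕜} (hx : ∀ n : ℕ, x ≠ -n) (n : ℕ) : (ascPochhammer 𝕜 n).eval x ≠ 0 := by
    rw [Ne, ascPochhammer_eval_eq_zero_iff]
    rintro ⟨k, -, hk⟩
    exact hx k (by rw [hk, neg_neg])
  have hnorm := summable_norm_ordinaryHypergeometric a b (a + b + 1 / 2) hz
  have hF := hasSum_ordinaryHypergeometric a b (a + b + 1 / 2) hz
  have hcauchy := (summable_norm_sum_mul_antidiagonal_of_summable_norm hnorm hnorm).of_norm.hasSum
  rw [← tsum_mul_tsum_eq_tsum_sum_antidiagonal_of_summable_norm hnorm hnorm, hF.tsum_eq,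
    ← sq] at hcauchy
  convert! hcauchy using 2 with n
  rw [← coeff_mk_ordinaryHypergeometricCoefficient_sq hc n, mul_div_cancel_left₀ _
    (mul_ne_zero (mul_ne_zero (hne hab n) (hne hc n)) (Nat.cast_ne_zero.2 n.factorial_ne_zero)),
    PowerSeries.coeff_mul, Finset.sum_mul]
  refine Finset.sum_congr rfl fun ij hij ↦ ?_
  obtain rfl := Finset.HasAntidiagonal.mem_antidiagonal.1 hij
  rw [pow_add, PowerSeries.coeff_mk, PowerSeries.coeff_mk]
  ring

theorem hasSum_ascPochhammer_half_pow_three {x : ℝ} (hx : ‖x‖ < 1) :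
    HasSum (fun n : ℕ ↦ (ascPochhammer ℝ n).eval (1 / 2) ^ 3 / (n ! : ℝ) ^ 3 * x ^ n)
      (₂F₁ (1 / 4) (1 / 4) (1 : ℝ) x ^ 2) := by
  have h := hasSum_ordinaryHypergeometric_sq (a := 1 / 4) (b := 1 / 4)
    (fun n ↦ by have := n.cast_nonneg (α := ℝ); linarith) hx
  convert! h using 2 with n
  · rw [show (2 * (1 / 4) : ℝ) = 1 / 2 by norm_num, show (1 / 4 + 1 / 4 : ℝ) = 1 / 2 by norm_num,
      show (2 * (1 / 2) : ℝ) = 1 by norm_num, add_halves, ascPochhammer_eval_one]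
    ring
  · norm_num

section DoubleSums

theorem hasSum_prod_mul {ι κ : Type*} {f : ι → ℝ} {g : κ → ℝ} {a b : ℝ} (hf : HasSum f a)
    (hg : HasSum g b) : HasSum (fun p : ι × κ ↦ f p.1 * g p.2) (a * b) :=
  hf.mul hg (summable_mul_of_summable_norm hf.summable.norm hg.summable.norm)

variable {α : Type*} [AddCommMonoid α] [TopologicalSpace α] [ContinuousAdd α]

theorem hasSum_int_prod_of_parity {F : ℤ × ℤ → α} {a b : α}
    (heven : HasSum (fun p : ℤ × ℤ ↦ F (p.1 + p.2, p.1 - p.2)) a)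
    (hodd : HasSum (fun p : ℤ × ℤ ↦ F (p.1 + p.2 + 1, p.1 - p.2)) b) : HasSum F (a + b) := by
  have hinj₀ : Function.Injective fun p : ℤ × ℤ ↦ (p.1 + p.2, p.1 - p.2) := fun p p' h ↦ by
    grind
  have hinj₁ : Function.Injective fun p : ℤ × ℤ ↦ (p.1 + p.2 + 1, p.1 - p.2) := fun p p' h ↦ by
    grind
  refine (hinj₀.hasSum_range_iff.2 heven).add_isCompl ?_ (hinj₁.hasSum_range_iff.2 hodd)
  have hrange₀ : Set.range (fun p : ℤ × ℤ ↦ (p.1 + p.2, p.1 - p.2)) =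
      {m | Even (m.1 + m.2)} := by
    ext ⟨m, n⟩
    refine ⟨?_, fun ⟨k, hk⟩ ↦ ⟨(k, m - k), ?_⟩⟩ <;> grind
  have hrange₁ : Set.range (fun p : ℤ × ℤ ↦ (p.1 + p.2 + 1, p.1 - p.2)) =
      {m | Even (m.1 + m.2)}ᶜ := by
    ext ⟨m, n⟩
    simp only [Set.mem_compl_iff, Set.mem_ofPred_eq, Int.not_even_iff_odd]
    refine ⟨?_, fun ⟨k, hk⟩ ↦ ⟨(k, m - 1 - k), ?_⟩⟩ <;> grind
  exact hrange₀ ▸ hrange₁ ▸ isCompl_compl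

end DoubleSums

section ThetaNullValues

variable {q t : ℝ}

theorem exp_neg_pi_mul_rpow (t x : ℝ) : exp (-π * t) ^ x = exp (-π * x * t) := by
  rw [← exp_mul]
  ring_nf

theorem exists_eq_exp_neg_pi_mul (hq : q ∈ Set.Ioo (0 : ℝ) 1) :
    ∃ t > 0, q = exp (-π * t) := by
  refine ⟨-log q / π, div_pos (neg_pos.2 (log_neg hq.1 hq.2)) pi_pos, ?_⟩
  rw [mul_div_assoc', neg_mul_neg, mul_div_cancel_left₀ _ pi_ne_zero, exp_log hq.1]

theorem exp_neg_pi_mul_mem_Ioo (ht : 0 < t) : exp (-π * t) ∈ Set.Ioo (0 : ℝ) 1 :=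
  ⟨exp_pos _, exp_lt_one_iff.2 (mul_neg_of_neg_of_pos (neg_neg_of_pos pi_pos) ht)⟩

theorem hasSum_theta2_evenKernel (ht : 0 < t) :
    HasSum (fun n : ℤ ↦ exp (-π * t) ^ ((n + 1 / 2 : ℝ) ^ 2))
      (HurwitzZeta.evenKernel ((1 / 2 : ℝ) : UnitAddCircle) t) := by
  simpa only [exp_neg_pi_mul_rpow] using HurwitzZeta.hasSum_int_evenKernel (1 / 2) ht

theorem hasSum_theta3_evenKernel (ht : 0 < t) :
    HasSum (fun n : ℤ ↦ exp (-π * t) ^ ((n : ℝ) ^ 2)) (HurwitzZeta.evenKernel 0 t) := by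
  simpa only [exp_neg_pi_mul_rpow, add_zero, AddCircle.coe_zero]
    using HurwitzZeta.hasSum_int_evenKernel 0 ht

theorem hasSum_theta4_cosKernel (ht : 0 < t) :
    HasSum (fun n : ℤ ↦ (-1 : ℝ) ^ n * exp (-π * t) ^ ((n : ℝ) ^ 2))
      (HurwitzZeta.cosKernel ((1 / 2 : ℝ) : UnitAddCircle) t) := by
  rw [← Complex.hasSum_ofReal]
  convert! HurwitzZeta.hasSum_int_cosKernel (1 / 2) ht using 2 with n
  rw [exp_neg_pi_mul_rpow, Complex.ofReal_mul]
  congr 1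
  rw [show 2 * π * Complex.I * ((1 / 2 : ℝ) : ℂ) * n = n * (π * Complex.I) by push_cast; ring,
    Complex.exp_int_mul, Complex.exp_pi_mul_I]
  push_cast
  rfl

theorem theta2_exp_neg_pi_div (ht : 0 < t) :
    theta2 (exp (-π * (1 / t))) = √t * theta4 (exp (-π * t)) := by
  have h1t := one_div_pos.2 ht
  rw [theta2, theta4, (hasSum_theta2_evenKernel h1t).tsum_eq, (hasSum_theta4_cosKernel ht).tsum_eq,
    HurwitzZeta.evenKernel_functional_equation, ← sqrt_eq_rpow, one_div_one_div,
    sqrt_div' _ ht.le, sqrt_one, one_div_one_div]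

theorem theta3_exp_neg_pi_div (ht : 0 < t) :
    theta3 (exp (-π * (1 / t))) = √t * theta3 (exp (-π * t)) := by
  have h1t := one_div_pos.2 ht
  rw [theta3, theta3, (hasSum_theta3_evenKernel h1t).tsum_eq, (hasSum_theta3_evenKernel ht).tsum_eq,
    HurwitzZeta.evenKernel_functional_equation, ← sqrt_eq_rpow, one_div_one_div,
    sqrt_div' _ ht.le, sqrt_one, one_div_one_div, HurwitzZeta.evenKernel_eq_cosKernel_of_zero]

theorem tendsto_evenKernel_atTop (a : UnitAddCircle) :
    Tendsto (HurwitzZeta.evenKernel a) atTop (𝓝 (if a = 0 then 1 else 0)) := by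
  obtain ⟨p, hp, h⟩ := HurwitzZeta.isBigO_atTop_evenKernel_sub a
  rw [← tendsto_sub_nhds_zero_iff]
  exact h.trans_tendsto <|
    tendsto_exp_atBot.comp (tendsto_id.const_mul_atTop_of_neg (neg_neg_of_pos hp))

theorem tendsto_theta2_exp_atTop :
    Tendsto (fun t ↦ theta2 (exp (-π * t))) atTop (𝓝 0) := by
  have hhalf : ((1 / 2 : ℝ) : UnitAddCircle) ≠ 0 := by
    rw [Ne, AddCircle.coe_eq_zero_iff]
    rintro ⟨n, hn⟩
    have h2n : 2 * (n : ℝ) = 1 := by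
      rw [zsmul_one] at hn
      linarith
    norm_cast at h2n
    lia
  refine (if_neg hhalf ▸ tendsto_evenKernel_atTop _).congr' ?_
  filter_upwards [eventually_gt_atTop 0] with t ht
  exact (hasSum_theta2_evenKernel ht).tsum_eq.symm

theorem tendsto_theta3_exp_atTop :
    Tendsto (fun t ↦ theta3 (exp (-π * t))) atTop (𝓝 1) := by
  refine (if_pos rfl ▸ tendsto_evenKernel_atTop 0).congr' ?_
  filter_upwards [eventually_gt_atTop 0] with t ht
  exact (hasSum_theta3_evenKernel ht).tsum_eq.symm

theorem hasSum_theta2 (hq : q ∈ Set.Ioo (0 : ℝ) 1) :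
    HasSum (fun n : ℤ ↦ q ^ ((n + 1 / 2 : ℝ) ^ 2)) (theta2 q) := by
  obtain ⟨t, ht, rfl⟩ := exists_eq_exp_neg_pi_mul hq
  exact (hasSum_theta2_evenKernel ht).summable.hasSum

theorem hasSum_theta3 (hq : q ∈ Set.Ioo (0 : ℝ) 1) :
    HasSum (fun n : ℤ ↦ q ^ ((n : ℝ) ^ 2)) (theta3 q) := by
  obtain ⟨t, ht, rfl⟩ := exists_eq_exp_neg_pi_mul hq
  exact (hasSum_theta3_evenKernel ht).summable.hasSum

theorem hasSum_theta4 (hq : q ∈ Set.Ioo (0 : ℝ) 1) :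
    HasSum (fun n : ℤ ↦ (-1 : ℝ) ^ n * q ^ ((n : ℝ) ^ 2)) (theta4 q) := by
  obtain ⟨t, ht, rfl⟩ := exists_eq_exp_neg_pi_mul hq
  exact (hasSum_theta4_cosKernel ht).summable.hasSum

theorem theta2_pos (hq : q ∈ Set.Ioo (0 : ℝ) 1) : 0 < theta2 q :=
  (hasSum_theta2 hq).summable.tsum_pos (fun _ ↦ (rpow_pos_of_pos hq.1 _).le) 0
    (rpow_pos_of_pos hq.1 _)

theorem theta3_pos (hq : q ∈ Set.Ioo (0 : ℝ) 1) : 0 < theta3 q :=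
  (hasSum_theta3 hq).summable.tsum_pos (fun _ ↦ (rpow_pos_of_pos hq.1 _).le) 0
    (rpow_pos_of_pos hq.1 _)

theorem theta4_pos (hq : q ∈ Set.Ioo (0 : ℝ) 1) : 0 < theta4 q := by
  obtain ⟨t, ht, rfl⟩ := exists_eq_exp_neg_pi_mul hq
  have h := theta2_pos (exp_neg_pi_mul_mem_Ioo (one_div_pos.2 ht))
  rw [theta2_exp_neg_pi_div ht] at h
  exact pos_of_mul_pos_right h (sqrt_nonneg t)

theorem sq_mem_Ioo_zero_one (hq : q ∈ Set.Ioo (0 : ℝ) 1) : q ^ 2 ∈ Set.Ioo (0 : ℝ) 1 :=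
  ⟨pow_pos hq.1 2, pow_lt_one₀ hq.1.le hq.2 two_ne_zero⟩

theorem rpow_mul_rpow_eq_sq_rpow_mul_sq_rpow (hq : 0 < q) {a b c d : ℝ}
    (h : a + b = 2 * (c + d)) : q ^ a * q ^ b = (q ^ 2) ^ c * (q ^ 2) ^ d := by
  rw [← rpow_add hq, ← rpow_add (pow_pos hq 2), ← rpow_natCast q 2, ← rpow_mul hq.le, h,
    Nat.cast_ofNat]

theorem theta3_sq (hq : q ∈ Set.Ioo (0 : ℝ) 1) :
    theta3 q ^ 2 = theta3 (q ^ 2) ^ 2 + theta2 (q ^ 2) ^ 2 := by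
  have h₂ := hasSum_theta2 (sq_mem_Ioo_zero_one hq)
  have h₃ := hasSum_theta3 (sq_mem_Ioo_zero_one hq)
  simp only [sq (theta3 _), sq (theta2 _)]
  refine (hasSum_prod_mul (hasSum_theta3 hq) (hasSum_theta3 hq)).unique
    (hasSum_int_prod_of_parity ?_ ?_)
  · convert! hasSum_prod_mul h₃ h₃ using 2 with p
    refine rpow_mul_rpow_eq_sq_rpow_mul_sq_rpow hq.1 ?_
    push_cast
    ring
  · convert! hasSum_prod_mul h₂ h₂ using 2 with p
    refine rpow_mul_rpow_eq_sq_rpow_mul_sq_rpow hq.1 ?_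
    push_cast
    ring

theorem theta4_sq (hq : q ∈ Set.Ioo (0 : ℝ) 1) :
    theta4 q ^ 2 = theta3 (q ^ 2) ^ 2 - theta2 (q ^ 2) ^ 2 := by
  have h₂ := hasSum_theta2 (sq_mem_Ioo_zero_one hq)
  have h₃ := hasSum_theta3 (sq_mem_Ioo_zero_one hq)
  simp only [sq (theta4 _), sq (theta3 _), sq (theta2 _), sub_eq_add_neg]
  refine (hasSum_prod_mul (hasSum_theta4 hq) (hasSum_theta4 hq)).unique
    (hasSum_int_prod_of_parity ?_ ?_)
  · convert! hasSum_prod_mul h₃ h₃ using 2 with p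
    rw [mul_mul_mul_comm, ← zpow_add₀ (by simp), Even.neg_one_zpow ⟨p.1, by ring⟩, one_mul]
    refine rpow_mul_rpow_eq_sq_rpow_mul_sq_rpow hq.1 ?_
    push_cast
    ring
  · convert! (hasSum_prod_mul h₂ h₂).neg using 2 with p
    rw [mul_mul_mul_comm, ← zpow_add₀ (by simp), Odd.neg_one_zpow ⟨p.1, by ring⟩, neg_one_mul]
    refine congrArg _ (rpow_mul_rpow_eq_sq_rpow_mul_sq_rpow hq.1 ?_)
    push_cast
    ring

theorem theta2_sq (hq : q ∈ Set.Ioo (0 : ℝ) 1) :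
    theta2 q ^ 2 = 2 * theta2 (q ^ 2) * theta3 (q ^ 2) := by
  have h₂ := hasSum_theta2 (sq_mem_Ioo_zero_one hq)
  have h₃ := hasSum_theta3 (sq_mem_Ioo_zero_one hq)
  rw [sq (theta2 _), mul_assoc, two_mul]
  refine (hasSum_prod_mul (hasSum_theta2 hq) (hasSum_theta2 hq)).unique
    (hasSum_int_prod_of_parity ?_ ?_)
  · convert! hasSum_prod_mul h₂ h₃ using 2 with p
    refine rpow_mul_rpow_eq_sq_rpow_mul_sq_rpow hq.1 ?_
    push_cast
    ring
  · rw [mul_comm]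
    convert! hasSum_prod_mul ((Equiv.addRight (1 : ℤ)).hasSum_iff.2 h₃) h₂ using 2 with p
    refine rpow_mul_rpow_eq_sq_rpow_mul_sq_rpow hq.1 ?_
    simp only [Equiv.coe_addRight]
    push_cast
    ring

end ThetaNullValues

section ModularLambda

variable {q t : ℝ}

theorem theta3_pow_four (hq : q ∈ Set.Ioo (0 : ℝ) 1) :
    theta3 q ^ 4 = theta2 q ^ 4 + theta4 q ^ 4 := by
  linear_combination (theta3 q ^ 2 + theta3 (q ^ 2) ^ 2 + theta2 (q ^ 2) ^ 2) * theta3_sq hq -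
    (theta2 q ^ 2 + 2 * theta2 (q ^ 2) * theta3 (q ^ 2)) * theta2_sq hq -
    (theta4 q ^ 2 + theta3 (q ^ 2) ^ 2 - theta2 (q ^ 2) ^ 2) * theta4_sq hq

theorem one_sub_modLambda (hq : q ∈ Set.Ioo (0 : ℝ) 1) :
    1 - modLambda q = theta4 q ^ 4 / theta3 q ^ 4 := by
  rw [modLambda, one_sub_div (pow_pos (theta3_pos hq) 4).ne', theta3_pow_four hq,
    add_sub_cancel_left]

theorem modLambda_mem_Ioo (hq : q ∈ Set.Ioo (0 : ℝ) 1) : modLambda q ∈ Set.Ioo (0 : ℝ) 1 := by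
  have h₃ := pow_pos (theta3_pos hq) 4
  refine ⟨div_pos (pow_pos (theta2_pos hq) 4) h₃, sub_pos.1 ?_⟩
  rw [one_sub_modLambda hq]
  exact div_pos (pow_pos (theta4_pos hq) 4) h₃

theorem modLambda_exp_neg_pi_div (ht : 0 < t) :
    modLambda (exp (-π * (1 / t))) = 1 - modLambda (exp (-π * t)) := by
  rw [one_sub_modLambda (exp_neg_pi_mul_mem_Ioo ht), modLambda, theta2_exp_neg_pi_div ht,
    theta3_exp_neg_pi_div ht, mul_pow, mul_pow,
    mul_div_mul_left _ _ (pow_pos (sqrt_pos.2 ht) 4).ne']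

theorem tendsto_modLambda_exp_atTop :
    Tendsto (fun t ↦ modLambda (exp (-π * t))) atTop (𝓝 0) := by
  convert! (tendsto_theta2_exp_atTop.pow 4).div (tendsto_theta3_exp_atTop.pow 4) (by simp) using 2
  simp

end ModularLambda

section JacobiInversion

variable {q : ℝ}

theorem ordinaryHypergeometric_modLambda_duplication (hq : q ∈ Set.Ioo (0 : ℝ) 1) :
    ₂F₁ (1 / 2) (1 / 2) (1 : ℝ) (modLambda q) / theta3 q ^ 2 =
      ₂F₁ (1 / 2) (1 / 2) (1 : ℝ) (modLambda (q ^ 2)) / theta3 (q ^ 2) ^ 2 := by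
  have hq₂ := sq_mem_Ioo_zero_one hq
  have hθ₃ := pow_pos (theta3_pos hq₂) 2
  set s := theta2 (q ^ 2) ^ 2 / theta3 (q ^ 2) ^ 2 with hs
  have hs₀ : 0 ≤ s := by positivity
  have hs₂ : modLambda (q ^ 2) = s ^ 2 := by
    rw [modLambda, hs]
    ring
  have hs₁ : s < 1 := by
    have := (modLambda_mem_Ioo hq₂).2
    rw [hs₂] at this
    exact (sq_lt_one_iff₀ hs₀).1 this
  have hθ : theta3 q ^ 2 = (1 + s) * theta3 (q ^ 2) ^ 2 := by
    rw [theta3_sq hq, hs, one_add_mul, div_mul_cancel₀ _ hθ₃.ne']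
  have hlam : modLambda q = 4 * s / (1 + s) ^ 2 := by
    rw [modLambda, show theta3 q ^ 4 = (theta3 q ^ 2) ^ 2 by ring,
      show theta2 q ^ 4 = (theta2 q ^ 2) ^ 2 by ring, hθ, theta2_sq hq, hs]
    field_simp
    ring
  have hlanden : ₂F₁ (1 / 2) (1 / 2) (1 : ℝ) (4 * s / (1 + s) ^ 2) =
      (1 + s) * ₂F₁ (1 / 2) (1 / 2) (1 : ℝ) (s ^ 2) := by
    have h := ordinaryHypergeometric_landen (a := 1 / 2) (b := 1 / 2)
      (fun n hn ↦ by have := n.cast_nonneg (α := ℝ); linarith) hs₀ hs₁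
    norm_num at h
    exact h
  rw [hθ, hlam, hs₂, hlanden, mul_div_mul_left _ _ (by positivity)]

theorem ordinaryHypergeometric_modLambda (hq : q ∈ Set.Ioo (0 : ℝ) 1) :
    ₂F₁ (1 / 2) (1 / 2) (1 : ℝ) (modLambda q) = theta3 q ^ 2 := by
  obtain ⟨t, ht, rfl⟩ := exists_eq_exp_neg_pi_mul hq
  set R : ℝ → ℝ := fun t ↦ ₂F₁ (1 / 2) (1 / 2) (1 : ℝ) (modLambda (exp (-π * t))) /
    theta3 (exp (-π * t)) ^ 2
  have hinv (n : ℕ) : R (2 ^ n * t) = R t := by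
    induction n with
    | zero => simp
    | succ n ih =>
      have h := ordinaryHypergeometric_modLambda_duplication
        (exp_neg_pi_mul_mem_Ioo (mul_pos (pow_pos two_pos n) ht))
      rw [← exp_nat_mul, show ((2 : ℕ) : ℝ) * (-π * (2 ^ n * t)) = -π * (2 ^ (n + 1) * t) by
        push_cast; ring] at h
      exact h.symm.trans ih
  have hlim : Tendsto R atTop (𝓝 1) := by
    have hK := (analyticAt_ordinaryHypergeometric (1 / 2) (1 / 2) (1 : ℝ)
      (by simp : ‖(0 : ℝ)‖ < 1)).continuousAt.tendsto.comp tendsto_modLambda_exp_atTop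
    convert! hK.div (tendsto_theta3_exp_atTop.pow 2) (by simp) using 2
    simp
  have hpow : Tendsto (fun n : ℕ ↦ (2 : ℝ) ^ n * t) atTop atTop :=
    (tendsto_pow_atTop_atTop_of_one_lt (r := (2 : ℝ)) one_lt_two).atTop_mul_const ht
  have hR₁ : R t = 1 := tendsto_nhds_unique
    (tendsto_const_nhds.congr fun n ↦ (hinv n).symm) (hlim.comp hpow)
  exact (div_eq_one_iff_eq (pow_pos (theta3_pos hq) 2).ne').1 hR₁

theorem Ioo_zero_exp_neg_pi_subset : Set.Ioo 0 (exp (-π)) ⊆ Set.Ioo 0 1 :=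
  Set.Ioo_subset_Ioo_right (exp_lt_one_iff.2 (neg_neg_of_pos pi_pos)).le

theorem modLambda_lt_half (hq : q ∈ Set.Ioo 0 (exp (-π))) : modLambda q < 1 / 2 := by
  obtain ⟨t, ht, rfl⟩ := exists_eq_exp_neg_pi_mul (Ioo_zero_exp_neg_pi_subset hq)
  have ht₁ : 1 < t := by
    have := exp_lt_exp.1 hq.2
    nlinarith [pi_pos]
  have hq₁ := exp_neg_pi_mul_mem_Ioo ht
  have hlam := modLambda_mem_Ioo hq₁
  have hK := ordinaryHypergeometric_modLambda hq₁
  have hdual := ordinaryHypergeometric_modLambda (exp_neg_pi_mul_mem_Ioo (one_div_pos.2 ht))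
  rw [modLambda_exp_neg_pi_div ht, theta3_exp_neg_pi_div ht, mul_pow, sq_sqrt ht.le] at hdual
  by_contra! hhalf
  have hmono := monotoneOn_ordinaryHypergeometric one_half_pos one_half_pos one_pos
    (Set.mem_Ico_of_Ioo ⟨sub_pos.2 hlam.2, sub_lt_self 1 hlam.1⟩) (Set.mem_Ico_of_Ioo hlam)
    (by linarith : 1 - modLambda (exp (-π * t)) ≤ modLambda (exp (-π * t)))
  rw [hdual, hK] at hmono
  exact ht₁.not_ge ((mul_le_iff_le_one_left (pow_pos (theta3_pos hq₁) 2)).1 hmono)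

theorem z4_mem_Ioo (hq : q ∈ Set.Ioo 0 (exp (-π))) : z4 q ∈ Set.Ioo (0 : ℝ) 1 := by
  have hlam := modLambda_mem_Ioo (Ioo_zero_exp_neg_pi_subset hq)
  have hhalf := modLambda_lt_half hq
  refine ⟨mul_pos (mul_pos four_pos hlam.1) (sub_pos.2 hlam.2), ?_⟩
  rw [z4]
  nlinarith [hlam.1, hhalf]

theorem ordinaryHypergeometric_z4 (hq : q ∈ Set.Ioo 0 (exp (-π))) :
    ₂F₁ (1 / 4) (1 / 4) (1 : ℝ) (z4 q) = theta3 q ^ 2 := by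
  have hq₁ := Ioo_zero_exp_neg_pi_subset hq
  have hkummer := ordinaryHypergeometric_kummer (a := 1 / 4) (b := 1 / 4)
    (fun n ↦ by have := n.cast_nonneg (α := ℝ); linarith)
    (modLambda_mem_Ioo hq₁).1.le (modLambda_lt_half hq)
  norm_num only at hkummer
  rw [← ordinaryHypergeometric_modLambda hq₁, z4, hkummer]

end JacobiInversion

theorem stmt_14 :
    ∀ q ∈ Set.Ioo (0 : ℝ) (Real.exp (-π)),
      (0 < z4 q ∧ z4 q < 1) ∧
      ∑' n : ℕ, ((ascPochhammer ℝ n).eval (1 / 2)) ^ 3 / ((n.factorial : ℝ)) ^ 3 * z4 q ^ n =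
        theta3 q ^ 4 := by
  intro q hq
  have hz := z4_mem_Ioo hq
  have hclausen := hasSum_ascPochhammer_half_pow_three
    ((norm_of_nonneg hz.1.le).trans_lt hz.2)
  rw [ordinaryHypergeometric_z4 hq, ← pow_mul] at hclausen
  exact ⟨hz, hclausen.tsum_eq⟩
end
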